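/- arXiv:2205.03581 — 10 statements merged into one kernel-verified Lean document; each statement's English description precedes it below -/
import Mathlib

section
/- Let A be a complex unital Banach algebra and a ∈ A. Then a is ag-Drazin invertible if and only if a is acc-quasi-polar, i.e., there exists an idempotent q ∈ A such that aq = qa, q ∈ aA ∩ Aa, and a(1 − q) ∈ A^acc. -/
open Filter Topology

/-- An element of a complex Banach algebra is quasinilpotent if its spectrum is `{0}`. -/
def IsQuasinilpotent {A : Type*} [NormedRing A] [NormedAlgebra ℂ A] (b : A) : Prop :=
  spectrum ℂ b = {0}

/-- `a` is generalized Drazin invertible. -/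
def IsGDrazinInv {A : Type*} [NormedRing A] [NormedAlgebra ℂ A] (a : A) : Prop :=
  ∃ x : A, a * x = x * a ∧ x * a * x = x ∧ IsQuasinilpotent (a - a ^ 2 * x)

/-- `a ∈ A^acc`: `a - λ1` is generalized Drazin invertible for all nonzero `λ`. -/
def MemAcc {A : Type*} [NormedRing A] [NormedAlgebra ℂ A] (a : A) : Prop :=
  ∀ l : ℂ, l ≠ 0 → IsGDrazinInv (a - l • (1 : A))

/-- `x` is an ag-Drazin inverse of `a`. -/
def IsAgDrazinInverseOf {A : Type*} [NormedRing A] [NormedAlgebra ℂ A] (x a : A) : Prop :=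
  a * x = x * a ∧ x * a * x = x ∧ MemAcc (a - a ^ 2 * x)

/-- `a` is ag-Drazin invertible. -/
def IsAgDrazinInv {A : Type*} [NormedRing A] [NormedAlgebra ℂ A] (a : A) : Prop :=
  ∃ x : A, IsAgDrazinInverseOf x a

/-- The generalized Drazin spectrum. -/
def gDrazinSpectrum {A : Type*} [NormedRing A] [NormedAlgebra ℂ A] (a : A) : Set ℂ :=
  {l : ℂ | ¬ IsGDrazinInv (a - l • (1 : A))}

/-- The ag-Drazin spectrum. -/
def agDrazinSpectrum {A : Type*} [NormedRing A] [NormedAlgebra ℂ A] (a : A) : Set ℂ :=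
  {l : ℂ | ¬ IsAgDrazinInv (a - l • (1 : A))}

/-- `a` is ag-Drazin invertible iff `a` is acc-quasi-polar. -/
theorem agDrazin_iff_acc_quasi_polar {A : Type*} [NormedRing A] [NormedAlgebra ℂ A]
    [CompleteSpace A] (a : A) :
    IsAgDrazinInv a ↔
      ∃ q : A, q * q = q ∧ a * q = q * a ∧ (∃ u : A, q = a * u) ∧ (∃ v : A, q = v * a) ∧
        MemAcc (a * (1 - q)) := by
  constructor
  · rintro ⟨x, hc, hx, hm⟩
    refine ⟨a * x, ?_, ?_, ⟨x, rfl⟩, ⟨x, hc⟩, ?_⟩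
    · rw [mul_assoc, ← mul_assoc x a x, hx]
    · rw [mul_assoc, ← hc]
    · have h : a * (1 - a * x) = a - a ^ 2 * x := by noncomm_ring
      rw [h]
      exact hm
  · rintro ⟨q, hq, hc, ⟨u, hu⟩, ⟨v, hv⟩, hm⟩
    have hvu : v * q = q * u := by
      calc v * q = v * (a * u) := by rw [← hu]
        _ = v * a * u := by rw [mul_assoc]
        _ = q * u := by rw [← hv]
    have h1 : a * (q * u) = q := by
      rw [← mul_assoc, hc, mul_assoc, ← hu, hq]
    have h2 : q * u * a = q := by
      rw [← hvu, mul_assoc, ← hc, ← mul_assoc, ← hv, hq]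
    refine ⟨q * u, h1.trans h2.symm, ?_, ?_⟩
    · rw [h2, ← mul_assoc, hq]
    · have h : a - a ^ 2 * (q * u) = a * (1 - q) := by
        rw [pow_two, mul_assoc, h1, mul_sub, mul_one]
      rw [h]
      exact hm
end

section
/- Let A be a complex unital Banach algebra and a ∈ A. Then a is ag-Drazin invertible if and only if there exists an idempotent p ∈ A such that ap = pa, a + p is generalized Drazin invertible, and ap ∈ A^acc. -/
open Filter Topology

set_option linter.unusedSimpArgs false
set_option linter.unusedSectionVars false

section helpers
variable {A : Type*} [NormedRing A] [NormedAlgebra ℂ A] [CompleteSpace A]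


theorem qn_tendsto (r : A) (hr : IsQuasinilpotent r) (M : ℝ) (hM : 0 ≤ M) :
    Tendsto (fun n : ℕ => ‖r ^ n‖ * M ^ n) atTop (𝓝 0) := by
  have h := spectrum.pow_nnnorm_pow_one_div_tendsto_nhds_spectralRadius r
  have h0 : spectralRadius ℂ r = 0 := by
    unfold IsQuasinilpotent at hr
    simp [spectralRadius, hr]
  rw [h0] at h
  set δ : NNReal := ⟨1 / (2 * (M + 1)), by positivity⟩ with hδ
  have hδ0 : 0 < δ := by
    rw [← NNReal.coe_pos]; change 0 < 1 / (2 * (M + 1)); positivity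
  have hev := h.eventually (gt_mem_nhds (show (0 : ENNReal) < (δ : ENNReal) by exact_mod_cast hδ0))
  have hbd : ∀ᶠ n : ℕ in atTop, ‖r ^ n‖ * M ^ n ≤ (1 / 2 : ℝ) ^ n := by
    filter_upwards [hev, eventually_gt_atTop 0] with n hn hn0
    have hn0' : (0 : ℝ) < n := by exact_mod_cast hn0
    have h1 : (‖r ^ n‖₊ : ENNReal) ≤ (δ : ENNReal) ^ n := by
      have := ENNReal.rpow_le_rpow hn.le hn0'.le
      rw [← ENNReal.rpow_mul, one_div, inv_mul_cancel₀ hn0'.ne', ENNReal.rpow_one,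
        ENNReal.rpow_natCast] at this
      exact this
    have h2 : ‖r ^ n‖₊ ≤ δ ^ n := by exact_mod_cast h1
    have h3 : ‖r ^ n‖ ≤ (1 / (2 * (M + 1))) ^ n := by
      have := NNReal.coe_le_coe.2 h2
      rw [NNReal.coe_pow] at this
      exact this
    calc ‖r ^ n‖ * M ^ n ≤ (1 / (2 * (M + 1))) ^ n * M ^ n := by gcongr
      _ = (1 / (2 * (M + 1)) * M) ^ n := by rw [mul_pow]
      _ ≤ (1 / 2 : ℝ) ^ n := by
        gcongr
        rw [div_mul_eq_mul_div, div_le_div_iff₀ (by positivity) (by positivity)]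
        linarith
  refine squeeze_zero' (Eventually.of_forall fun n => by positivity) hbd ?_
  exact tendsto_pow_atTop_nhds_zero_of_lt_one (by norm_num) (by norm_num)

theorem qn_sylv (r y t : A) (hr : IsQuasinilpotent r) (C : ℝ)
    (ht : ∀ n : ℕ, ‖t‖ ≤ C * (‖r ^ n‖ * ‖y‖ ^ n)) : t = 0 := by
  have h := (qn_tendsto r hr ‖y‖ (norm_nonneg y)).const_mul C
  rw [mul_zero] at h
  have := ge_of_tendsto' h ht
  exact norm_le_zero_iff.1 this

theorem norm_pow_le_aux (c y : A) (n : ℕ) : ‖c * y ^ n‖ ≤ ‖c‖ * ‖y‖ ^ n := by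
  induction n with
  | zero => simp
  | succ n ih =>
    rw [pow_succ, ← mul_assoc, pow_succ, ← mul_assoc]
    exact (norm_mul_le _ _).trans (by gcongr)

theorem norm_pow_le_aux' (c y : A) (n : ℕ) : ‖y ^ n * c‖ ≤ ‖c‖ * ‖y‖ ^ n := by
  induction n with
  | zero => simp
  | succ n ih =>
    rw [pow_succ', mul_assoc, pow_succ', ]
    calc _ ≤ ‖y‖ * ‖y ^ n * c‖ := norm_mul_le _ _
      _ ≤ ‖y‖ * (‖c‖ * ‖y‖ ^ n) := by gcongr
      _ = _ := by ring

theorem qn_left (r y t : A) (hr : IsQuasinilpotent r) (ht : r * t * y = t) : t = 0 := by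
  refine qn_sylv r y t hr ‖t‖ fun n => ?_
  have h : r ^ n * (t * y ^ n) = t := by
    induction n with
    | zero => simp
    | succ n ih =>
      calc _ = r ^ n * ((r * t * y) * y ^ n) := by rw [pow_succ, pow_succ']; noncomm_ring
        _ = t := by rw [ht, ih]
  calc ‖t‖ = ‖r ^ n * (t * y ^ n)‖ := by rw [h]
    _ ≤ ‖r ^ n‖ * (‖t‖ * ‖y‖ ^ n) :=
      (norm_mul_le _ _).trans (by gcongr; exact norm_pow_le_aux t y n)
    _ = _ := by ring

theorem qn_right (r y t : A) (hr : IsQuasinilpotent r) (ht : y * t * r = t) : t = 0 := by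
  refine qn_sylv r y t hr ‖t‖ fun n => ?_
  have h : (y ^ n * t) * r ^ n = t := by
    induction n with
    | zero => simp
    | succ n ih =>
      calc _ = (y ^ n * (y * t * r)) * r ^ n := by rw [pow_succ y, pow_succ' r]; noncomm_ring
        _ = t := by rw [ht, ih]
  calc ‖t‖ = ‖(y ^ n * t) * r ^ n‖ := by rw [h]
    _ ≤ (‖t‖ * ‖y‖ ^ n) * ‖r ^ n‖ :=
      (norm_mul_le _ _).trans (by gcongr; exact norm_pow_le_aux' t y n)
    _ = _ := by ring

theorem gd_comm (a y c : A) (h1 : a * y = y * a) (h2 : y * a * y = y)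
    (h3 : IsQuasinilpotent (a - a ^ 2 * y)) (hc : a * c = c * a) : y * c = c * y := by
  have hyay : ∀ z, y * (a * (y * z)) = y * z := fun z => by
    rw [← mul_assoc, ← mul_assoc, h2]
  have h2' : y * (a * y) = y := by rw [← mul_assoc, h2]
  have h1' : ∀ z, a * (y * z) = y * (a * z) := fun z => by rw [← mul_assoc, h1, mul_assoc]
  have hc' : ∀ z, a * (c * z) = c * (a * z) := fun z => by rw [← mul_assoc, hc, mul_assoc]
  have hyy : y * (y * a) = y := by rw [← h1, h2']
  have hyy' : ∀ z, y * (y * (a * z)) = y * z := fun z => by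
    rw [← h1', hyay]
  have q1 : ∀ z, y * (y * (c * (a * z))) = y * (c * z) := fun z => by rw [← hc', hyy']
  have q2 : ∀ z, y * (y * (c * (y * (a * z)))) = y * (c * (y * z)) := fun z => by
    rw [← h1', q1]
  have e1 : (1 - a * y) * c * (a * y) = 0 := by
    apply qn_left _ y _ h3
    simp only [sub_mul, mul_sub, mul_assoc, one_mul, mul_one, pow_two, h1, h1', hc, hc', hyy, hyy', q1, q2]
    try abel
  have e2 : (a * y) * c * (1 - a * y) = 0 := by
    apply qn_right _ y _ h3
    simp only [sub_mul, mul_sub, mul_assoc, one_mul, mul_one, pow_two, h1, h1', hc, hc', hyy, hyy', q1, q2]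
    try abel
  have e3 : (a * y) * c = c * (a * y) := by
    have e1' : c * (a * y) - a * y * c * (a * y) = 0 := by rw [← e1]; noncomm_ring
    have e2' : a * y * c - a * y * c * (a * y) = 0 := by rw [← e2]; noncomm_ring
    exact (sub_eq_zero.1 e2').trans (sub_eq_zero.1 e1').symm
  calc y * c = y * ((a * y) * c) := by rw [← mul_assoc, h2']
    _ = y * (c * (a * y)) := by rw [e3]
    _ = y * (a * c) * y := by rw [hc]; noncomm_ring
    _ = (a * y) * c * y := by rw [h1]; noncomm_ring
    _ = c * (a * y * y) := by rw [e3]; noncomm_ring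
    _ = c * y := by rw [h1, h2]

theorem unit_glue (p u v : A) (hp : p * p = p) (hu : u * p = p * u) (hv : v * p = p * v)
    (iu : IsUnit u) (iv : IsUnit v) : IsUnit (p * u + (1 - p) * v) := by
  obtain ⟨u, rfl⟩ := iu
  obtain ⟨v, rfl⟩ := iv
  have hu' : (↑u⁻¹ : A) * p = p * ↑u⁻¹ := (Commute.units_inv_left (u := u) hu)
  have hv' : (↑v⁻¹ : A) * p = p * ↑v⁻¹ := (Commute.units_inv_left (u := v) hv)
  have hp' : ∀ z, p * (p * z) = p * z := fun z => by rw [← mul_assoc, hp]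
  have k1 : ∀ z, (u : A) * (p * z) = p * (u * z) := fun z => by rw [← mul_assoc, hu, mul_assoc]
  have k2 : ∀ z, (v : A) * (p * z) = p * (v * z) := fun z => by rw [← mul_assoc, hv, mul_assoc]
  have k3 : ∀ z, (↑u⁻¹ : A) * (p * z) = p * (↑u⁻¹ * z) := fun z => by
    rw [← mul_assoc, hu', mul_assoc]
  have k4 : ∀ z, (↑v⁻¹ : A) * (p * z) = p * (↑v⁻¹ * z) := fun z => by
    rw [← mul_assoc, hv', mul_assoc]
  refine ⟨⟨p * u + (1 - p) * v, p * ↑u⁻¹ + (1 - p) * ↑v⁻¹, ?_, ?_⟩, rfl⟩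
  · simp only [sub_mul, mul_sub, add_mul, mul_add, mul_assoc, one_mul, mul_one, k1, k2, k3, k4,
      hp, hp', Units.mul_inv]
    abel
  · simp only [sub_mul, mul_sub, add_mul, mul_add, mul_assoc, one_mul, mul_one, k1, k2, k3, k4,
      hp, hp', Units.inv_mul]
    abel

theorem qn_iff [Nontrivial A] (b : A) :
    IsQuasinilpotent b ↔ ∀ l : ℂ, l ≠ 0 → IsUnit (algebraMap ℂ A l - b) := by
  unfold IsQuasinilpotent
  constructor
  · intro h l hl
    by_contra hc
    have : l ∈ spectrum ℂ b := hc
    rw [h] at this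
    exact hl this
  · intro h
    refine (spectrum.nonempty b).subset_singleton_iff.1 fun l hl => ?_
    by_contra hc
    exact hl (h l hc)

theorem qn_nontrivial (b : A) (h : IsQuasinilpotent b) : Nontrivial A := by
  by_contra hn
  rw [not_nontrivial_iff_subsingleton] at hn
  have : (0 : ℂ) ∈ spectrum ℂ b := by rw [h]; rfl
  exact this (isUnit_of_subsingleton _)

theorem gd_unit [Nontrivial A] (v w : A) (h1 : v * w = 1) (h2 : w * v = 1) : IsGDrazinInv v := by
  refine ⟨w, by rw [h1, h2], by rw [h2, one_mul], ?_⟩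
  rw [pow_two, mul_assoc, h1, mul_one, sub_self]
  exact spectrum.zero_eq

theorem gd_glue (p u v : A) (hp : p * p = p) (hu : u * p = p * u) (hv : v * p = p * v)
    (iu : IsGDrazinInv u) (iv : IsGDrazinInv v) : IsGDrazinInv (p * u + (1 - p) * v) := by
  obtain ⟨y, y1, y2, y3⟩ := iu
  obtain ⟨z, z1, z2, z3⟩ := iv
  have hy := gd_comm u y p y1 y2 y3 hu
  have hz := gd_comm v z p z1 z2 z3 hv
  have : Nontrivial A := qn_nontrivial _ y3
  have hp' : ∀ z, p * (p * z) = p * z := fun z => by rw [← mul_assoc, hp]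
  have k1 : ∀ t, u * (p * t) = p * (u * t) := fun t => by rw [← mul_assoc, hu, mul_assoc]
  have k2 : ∀ t, v * (p * t) = p * (v * t) := fun t => by rw [← mul_assoc, hv, mul_assoc]
  have k3 : ∀ t, y * (p * t) = p * (y * t) := fun t => by rw [← mul_assoc, hy, mul_assoc]
  have k4 : ∀ t, z * (p * t) = p * (z * t) := fun t => by rw [← mul_assoc, hz, mul_assoc]
  have y2' : y * (u * y) = y := by rw [← mul_assoc, y2]
  have z2' : z * (v * z) = z := by rw [← mul_assoc, z2]
  refine ⟨p * y + (1 - p) * z, ?_, ?_, ?_⟩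
  · simp only [sub_mul, mul_sub, add_mul, mul_add, mul_assoc, one_mul, mul_one, k1, k2, k3, k4,
      hp, hp', y1, z1]
    abel
  · simp only [sub_mul, mul_sub, add_mul, mul_add, mul_assoc, one_mul, mul_one, k1, k2, k3, k4,
      hp, hp', y2', z2']
    abel
  · rw [qn_iff] at y3 z3 ⊢
    intro l hl
    have hl1 : algebraMap ℂ A l * p = p * algebraMap ℂ A l := Algebra.commutes l p
    have := unit_glue p _ _ hp ?_ ?_ (y3 l hl) (z3 l hl)
    · convert this using 1
      simp only [sub_mul, mul_sub, add_mul, mul_add, mul_assoc, one_mul, mul_one, k1, k2, k3, k4,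
        hp, hp', pow_two]
      abel
    · simp only [sub_mul, mul_sub, mul_assoc, pow_two, hl1, hu, hy, k1, k3]
    · simp only [sub_mul, mul_sub, mul_assoc, pow_two, hl1, hv, hz, k2, k4]

end helpers

theorem agDrazin_iff_exists_idem_gDrazin {A : Type*} [NormedRing A] [NormedAlgebra ℂ A]
    [CompleteSpace A] (a : A) :
    IsAgDrazinInv a ↔
      ∃ p : A, p * p = p ∧ a * p = p * a ∧ IsGDrazinInv (a + p) ∧ MemAcc (a * p) := by
  constructor
  · rintro ⟨x, h1, h2, h3⟩
    have h2' : x * (a * x) = x := by rw [← mul_assoc, h2]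
    have i1 : (a * x) * (a * x) = a * x := by rw [mul_assoc, h2']
    have i2 : a * (a * x) = a * x * a := by rw [mul_assoc, h1]
    have i3 : x * (a * x) = a * x * x := by rw [h1, mul_assoc, ← h1]
    have ixx : a * x * x = x := by rw [← i3, h2']
    have hap : a * (1 - a * x) = a - a ^ 2 * x := by noncomm_ring
    have hp : (1 - a * x) * (1 - a * x) = 1 - a * x := by
      rw [mul_sub, sub_mul, sub_mul, i1]; simp
    have hc : a * (1 - a * x) = (1 - a * x) * a := by
      rw [mul_sub, sub_mul, i2]; simp
    refine ⟨1 - a * x, hp, hc, ?_, by rw [hap]; exact h3⟩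
    have g := h3 (-1) (by norm_num)
    have : Nontrivial A := by
      obtain ⟨y, _, _, y3⟩ := g
      exact qn_nontrivial _ y3
    set p := 1 - a * x with hpd
    have hax : a * x = 1 - p := by rw [hpd]; abel
    have hpx : p * x = 0 := by rw [hpd, sub_mul, ixx, one_mul, sub_self]
    have hxp : x * p = 0 := by rw [hpd, mul_sub, h2', mul_one, sub_self]
    have kc : ∀ t, a * (p * t) = p * (a * t) := fun t => by rw [← mul_assoc, hc, mul_assoc]
    have kp : ∀ t, p * (p * t) = p * t := fun t => by rw [← mul_assoc, hp]
    have gv : IsGDrazinInv (a * (1 - p) + p) := by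
      apply gd_unit _ (x + p)
      · simp only [sub_mul, mul_sub, add_mul, mul_add, mul_assoc, one_mul, mul_one, hc, kc, kp,
          hp, hpx, hxp, hax, mul_zero]
        abel
      · have : x * a = 1 - p := by rw [← h1, hax]
        have k : x * (p * a) = 0 := by rw [← mul_assoc, hxp, zero_mul]
        simp only [sub_mul, mul_sub, add_mul, mul_add, mul_assoc, one_mul, mul_one, hc, kc, kp,
          hp, hpx, hxp, this, k]
        abel
    have gg := gd_glue p _ _ hp ?_ ?_ g gv
    · convert gg using 1
      rw [← hap]
      simp only [sub_mul, mul_sub, add_mul, mul_add, mul_assoc, one_mul, mul_one, hc, kc, kp, hp,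
        neg_smul, one_smul, mul_neg]
      abel
    · rw [← hap]
      simp only [sub_mul, mul_sub, mul_assoc, one_mul, mul_one, hc, kc, kp, hp,
        neg_smul, one_smul, mul_neg, neg_mul]
    · simp only [sub_mul, mul_sub, add_mul, mul_add, mul_assoc, one_mul, mul_one, hc, kc, kp, hp]
  · rintro ⟨p, hp, hc, ⟨b, b1, b2, b3⟩, hm⟩
    have : Nontrivial A := qn_nontrivial _ b3
    have kc : ∀ t, a * (p * t) = p * (a * t) := fun t => by rw [← mul_assoc, hc, mul_assoc]
    have kp : ∀ t, p * (p * t) = p * t := fun t => by rw [← mul_assoc, hp]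
    have hb := gd_comm _ b p b1 b2 b3 (by rw [add_mul, mul_add, hc])
    have hba := gd_comm _ b a b1 b2 b3 (by rw [add_mul, mul_add, hc])
    have kb : ∀ t, b * (p * t) = p * (b * t) := fun t => by rw [← mul_assoc, hb, mul_assoc]
    have kba : ∀ t, b * (a * t) = a * (b * t) := fun t => by rw [← mul_assoc, hba, mul_assoc]
    have b2' : a * (b * b) + p * (b * b) = b := by
      rw [← b1] at b2
      rw [← b2.symm.symm]
      conv_rhs => rw [← b2]
      rw [b2]
      rw [← add_mul, ← mul_assoc, b2]
    refine ⟨b * (1 - p), ?_, ?_, ?_⟩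
    · simp only [sub_mul, mul_sub, mul_assoc, one_mul, mul_one, hc, kc, hb, kb, hba, kba]
    · have : (1 - p) * (a * (b * b) + p * (b * b)) = (1 - p) * b := by rw [b2']
      simp only [sub_mul, mul_sub, mul_add, mul_assoc, one_mul, mul_one, hc, kc, hb, kb, hba, kba,
        hp, kp] at this ⊢
      rw [← this]
      abel
    · intro l hl
      have g := hm l hl
      have gv : IsGDrazinInv ((a + p) - (a + p) ^ 2 * b - l • (1 : A)) := by
        have hu := (qn_iff _).1 b3 l hl
        have hu2 := hu.neg
        rw [neg_sub, Algebra.algebraMap_eq_smul_one] at hu2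
        obtain ⟨w, hw⟩ := hu2
        rw [← hw]
        exact gd_unit _ (↑w⁻¹) w.mul_inv w.inv_mul
      have gg := gd_glue p _ _ hp ?_ ?_ g gv
      · convert gg using 1
        simp only [sub_mul, mul_sub, add_mul, mul_add, mul_assoc, one_mul, mul_one, hc, kc, kp, hp,
          hb, kb, hba, kba, pow_two, mul_smul_comm, smul_mul_assoc, smul_sub]
        abel
      · simp only [sub_mul, mul_sub, mul_assoc, one_mul, mul_one, hc, kc, kp, hp,
          mul_smul_comm, smul_mul_assoc]
      · simp only [sub_mul, mul_sub, add_mul, mul_add, mul_assoc, one_mul, mul_one, hc, kc, kp, hp,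
          hb, kb, hba, kba, pow_two, mul_smul_comm, smul_mul_assoc]
end

section
/- Let A be a complex unital Banach algebra and a ∈ A. Then a is ag-Drazin invertible if and only if there exists an idempotent f ∈ A such that af = fa, a(1 − f) ∈ A^acc, and af + 1 − f is invertible in A. -/
open Filter Topology

theorem agDrazin_iff_exists_idem_unit {A : Type*} [NormedRing A] [NormedAlgebra ℂ A]
    [CompleteSpace A] (a : A) :
    IsAgDrazinInv a ↔
      ∃ f : A, f * f = f ∧ a * f = f * a ∧ MemAcc (a * (1 - f)) ∧
        IsUnit (a * f + 1 - f) := by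
  constructor
  · rintro ⟨x, h1, h2, h3⟩
    have hf : a * x * (a * x) = a * x := by
      rw [mul_assoc, ← mul_assoc x a x, h2]
    have hfx : a * x * x = x := by rw [h1, h2]
    have hxf : x * (a * x) = x := by rw [← mul_assoc, h2]
    have ha : a * (a * x) = a * x * a := by rw [mul_assoc, h1]
    refine ⟨a * x, hf, ha, ?_, ?_⟩
    · have : a * (1 - a * x) = a - a ^ 2 * x := by noncomm_ring
      rw [this]; exact h3
    · refine ⟨⟨a * (a * x) + 1 - a * x, x + 1 - a * x, ?_, ?_⟩, rfl⟩
      · have e1 : a * (a * x) * x = a * x := by rw [mul_assoc, hfx]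
        have e2 : a * (a * x) * (a * x) = a * (a * x) := by rw [mul_assoc, hf]
        simp only [mul_add, add_mul, mul_sub, sub_mul, mul_one, one_mul, e1, e2, hf, hfx]
        abel
      · have e1 : x * (a * (a * x)) = a * x := by
          rw [← mul_assoc, ← h1, hf]
        have e2 : a * x * (a * (a * x)) = a * (a * x) := by
          rw [ha, ← mul_assoc, hf]
        simp only [mul_add, add_mul, mul_sub, sub_mul, mul_one, one_mul, e1, e2, hf, hxf]
        abel
  · rintro ⟨f, hf, ha, h3, ⟨u, hu⟩⟩
    have huf : (u : A) * f = a * f := by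
      rw [hu, sub_mul, add_mul, mul_assoc, hf]; simp
    have hca : Commute a (u : A) := by
      rw [hu]
      have : Commute a f := ha
      exact (((Commute.refl a).mul_right this).add_right (Commute.one_right a)).sub_right this
    have hcf : Commute f (u : A) := by
      rw [hu]
      have : Commute f a := ha.symm
      exact ((this.mul_right (Commute.refl f)).add_right (Commute.one_right f)).sub_right
        (Commute.refl f)
    have hca' : a * (↑u⁻¹ : A) = (↑u⁻¹ : A) * a := hca.units_inv_right
    have hcf' : f * (↑u⁻¹ : A) = (↑u⁻¹ : A) * f := hcf.units_inv_right
    have hax : a * ((↑u⁻¹ : A) * f) = f := by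
      rw [← mul_assoc, hca', mul_assoc, ← huf, Units.inv_mul_cancel_left]
    refine ⟨(↑u⁻¹ : A) * f, ?_, ?_, ?_⟩
    · rw [← mul_assoc, hca', mul_assoc, mul_assoc, ha]
    · rw [mul_assoc _ a, hax, mul_assoc, hf]
    · have : a - a ^ 2 * ((↑u⁻¹ : A) * f) = a * (1 - f) := by
        rw [pow_two, mul_assoc a a, hax, mul_sub, mul_one]
      rw [this]; exact h3
end

section
/- Let A be a complex unital Banach algebra and a ∈ A. Then a has an ag-Drazin inverse x such that the spectrum σ(a − a²x) is a finite set if and only if a is generalized Drazin invertible. -/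
open Filter Topology

lemma aux_tendsto {A : Type*} [NormedRing A] [NormedAlgebra ℂ A] [CompleteSpace A] (n x : A)
    (hn : spectrum ℂ n = {0}) :
    Tendsto (fun k : ℕ => ‖n ^ k‖ * ‖x ^ k‖) atTop (𝓝 0) := by
  have hr : spectralRadius ℂ n = 0 := by
    simp [spectralRadius, hn]
  have h := spectrum.pow_norm_pow_one_div_tendsto_nhds_spectralRadius n
  rw [hr] at h
  set ε : ℝ := 1 / (2 * (‖x‖ + 1)) with hε
  have hx0 : 0 ≤ ‖x‖ := norm_nonneg x
  have hε0 : 0 < ε := by positivity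
  have hεx : ε * ‖x‖ ≤ 1 / 2 := by
    rw [hε, div_mul_eq_mul_div, div_le_div_iff₀ (by positivity) (by norm_num)]
    linarith
  have hev := h.eventually_lt_const (ENNReal.ofReal_pos.mpr hε0)
  refine squeeze_zero' (.of_forall fun k => by positivity) ?_
    (tendsto_pow_atTop_nhds_zero_of_lt_one (r := (1 / 2 : ℝ)) (by norm_num) (by norm_num))
  filter_upwards [hev, eventually_gt_atTop 0] with k hk hk0
  have h1 : ‖n ^ k‖ ^ (1 / k : ℝ) < ε := (ENNReal.ofReal_lt_ofReal_iff hε0).mp hk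
  have h2 : ‖n ^ k‖ ≤ ε ^ k := by
    have := pow_le_pow_left₀ (by positivity) h1.le k
    rwa [one_div, Real.rpow_inv_natCast_pow (norm_nonneg _) hk0.ne'] at this
  calc ‖n ^ k‖ * ‖x ^ k‖ ≤ ε ^ k * ‖x‖ ^ k := by
        gcongr
        exact norm_pow_le' x hk0
    _ = (ε * ‖x‖) ^ k := (mul_pow _ _ _).symm
    _ ≤ _ := by gcongr

lemma aux_zero {A : Type*} [NormedRing A] [NormedAlgebra ℂ A] [CompleteSpace A] (n x w d : A)
    (u v : A) (hn : spectrum ℂ n = {0})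
    (h : ∀ k : ℕ, w = u * n ^ k * d * x ^ k * v) : w = 0 := by
  have ht := (aux_tendsto n x hn).const_mul (‖u‖ * ‖d‖ * ‖v‖)
  rw [mul_zero] at ht
  have : ‖w‖ ≤ 0 := by
    refine ge_of_tendsto' ht fun k => ?_
    conv_lhs => rw [h k]
    calc _ ≤ ‖u‖ * ‖n ^ k‖ * ‖d‖ * ‖x ^ k‖ * ‖v‖ := by
          refine (norm_mul_le _ _).trans ?_
          gcongr
          refine (norm_mul_le _ _).trans ?_
          gcongr
          refine (norm_mul_le _ _).trans ?_
          gcongr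
          exact norm_mul_le _ _
      _ = _ := by ring
  exact norm_le_zero_iff.mp this

lemma aux_zero' {A : Type*} [NormedRing A] [NormedAlgebra ℂ A] [CompleteSpace A] (n x w d : A)
    (u v : A) (hn : spectrum ℂ n = {0})
    (h : ∀ k : ℕ, w = u * x ^ k * d * n ^ k * v) : w = 0 := by
  have ht := (aux_tendsto n x hn).const_mul (‖u‖ * ‖d‖ * ‖v‖)
  rw [mul_zero] at ht
  have : ‖w‖ ≤ 0 := by
    refine ge_of_tendsto' ht fun k => ?_
    conv_lhs => rw [h k]
    calc _ ≤ ‖u‖ * ‖x ^ k‖ * ‖d‖ * ‖n ^ k‖ * ‖v‖ := by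
          refine (norm_mul_le _ _).trans ?_
          gcongr
          refine (norm_mul_le _ _).trans ?_
          gcongr
          refine (norm_mul_le _ _).trans ?_
          gcongr
          exact norm_mul_le _ _
      _ = _ := by ring
  exact norm_le_zero_iff.mp this

lemma aux_comm {A : Type*} [NormedRing A] [NormedAlgebra ℂ A] [CompleteSpace A] (c x d : A)
    (h : c * x = x * c) (hx : x * c * x = x) (hn : spectrum ℂ (c - c ^ 2 * x) = {0})
    (hd : Commute c d) : Commute (c * x) d := by
  have hcx : Commute c x := h
  set p := c * x with hp
  have hpc : Commute p c := (Commute.refl c).mul_left hcx.symm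
  have hpx : Commute p x := hcx.mul_left (Commute.refl x)
  have hpp : p * p = p := by
    rw [hp, mul_assoc, ← mul_assoc x, hx]
  have hnq : c - c ^ 2 * x = c * (1 - p) := by rw [hp]; noncomm_ring
  have hqq : (1 - p) * (1 - p) = 1 - p := by
    simp [mul_sub, sub_mul, hpp]
  have hcq : Commute c (1 - p) := (Commute.one_right c).sub_right hpc.symm
  have hnk : ∀ k : ℕ, (1 - p) * c ^ k = (1 - p) * (c - c ^ 2 * x) ^ k := by
    intro k
    rw [hnq, hcq.mul_pow, ← mul_assoc, ((hcq.pow_left k).eq).symm, mul_assoc, ← pow_succ']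
    rw [(show IsIdempotentElem (1 - p) from hqq).pow_succ_eq]
  have hnk' : ∀ k : ℕ, c ^ k * (1 - p) = (c - c ^ 2 * x) ^ k * (1 - p) := by
    intro k
    rw [hnq, hcq.mul_pow, mul_assoc, ← pow_succ]
    rw [(show IsIdempotentElem (1 - p) from hqq).pow_succ_eq]
  have hpk : ∀ k : ℕ, c ^ k * x ^ k * p = p := by
    intro k
    rw [← hcx.mul_pow, ← pow_succ]
    exact (show IsIdempotentElem p from hpp).pow_succ_eq k
  have hpk' : ∀ k : ℕ, p * x ^ k * c ^ k = p := by
    intro k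
    rw [mul_assoc, ← hcx.symm.mul_pow, ← h, ← pow_succ']
    exact (show IsIdempotentElem p from hpp).pow_succ_eq k
  have h1 : (1 - p) * d * p = 0 := by
    refine aux_zero (c - c ^ 2 * x) x _ d (1 - p) p hn fun k => ?_
    rw [← hnk, mul_assoc (1 - p) (c ^ k) d, (hd.pow_left k).eq]
    have := congrArg (fun t => (1 - p) * d * t) (hpk k)
    simp only [mul_assoc] at this ⊢
    exact this.symm
  have h2 : p * d * (1 - p) = 0 := by
    refine aux_zero' (c - c ^ 2 * x) x _ d p (1 - p) hn fun k => ?_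
    rw [mul_assoc _ (_ ^ k) (1 - p), ← hnk', mul_assoc (p * x ^ k) d, ← mul_assoc d (c ^ k), ← (hd.pow_left k).eq]
    have := congrArg (fun t => t * (d * (1 - p))) (hpk' k)
    simp only [mul_assoc] at this ⊢
    exact this.symm
  have e1 : d * p = p * d * p := by
    rw [sub_mul, sub_mul, one_mul, sub_eq_zero] at h1; exact h1
  have e2 : p * d = p * d * p := by
    rw [mul_sub, mul_one, sub_eq_zero] at h2; exact h2
  exact e2.trans e1.symm

lemma aux_unit {A : Type*} [Ring A] {a b : A} (hab : Commute a b) (h : a * b = 1) : IsUnit a :=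
  ⟨⟨a, b, h, hab.eq ▸ h⟩, rfl⟩

lemma aux_main {A : Type*} [NormedRing A] [NormedAlgebra ℂ A] [CompleteSpace A] (b : A)
    (hb : MemAcc b) (S : Finset ℂ) (hS : ∀ l ∈ S, l ≠ 0) :
    ∃ e y : A, e * e = e ∧ Commute b e ∧ Commute b y ∧ b * y = 1 - e ∧
      spectrum ℂ (b * e) ⊆ (spectrum ℂ b \ S) ∪ {0} := by
  classical
  induction S using Finset.induction_on with
  | empty => exact ⟨1, 0, by simp, by simp, by simp, by simp, by simp⟩
  | insert l S hl ih =>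
    obtain ⟨e, y, hee, hbe, hby, hbye, hsp⟩ := ih fun l hl => hS l (Finset.mem_insert_of_mem hl)
    have hl0 : l ≠ 0 := hS l (Finset.mem_insert_self _ _)
    obtain ⟨x, hx1, hx2, hx3⟩ := hb l hl0
    set c := b - l • (1 : A) with hc
    have hbc : b = l • (1 : A) + c := by rw [hc]; abel
    have hcom : ∀ d : A, Commute b d → Commute c d := fun d hd =>
      hd.sub_left ((Commute.one_left d).smul_left l)
    have hce : Commute c e := hcom e hbe
    have hcb : Commute c b := hcom b rfl
    have hpe : Commute (c * x) e := aux_comm c x e hx1 hx2 hx3 hce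
    have hpb : Commute (c * x) b := aux_comm c x b hx1 hx2 hx3 hcb
    have hcx : Commute c x := hx1
    have hxb : Commute x b := by
      rw [hbc]; exact ((Commute.one_right x).smul_right l).add_right hcx.symm
    set p := c * x with hp
    have hpx : Commute p x := hcx.mul_left (Commute.refl x)
    have hpc : Commute p c := (Commute.refl c).mul_left hcx.symm
    have hpp : p * p = p := by
      rw [hp, mul_assoc, ← mul_assoc x, hx2]
    have hnq : c - c ^ 2 * x = c * (1 - p) := by rw [hp]; noncomm_ring
    -- the commuting facts for x and e
    have hxp : x = x * p := by rw [hp, ← mul_assoc, hx2]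
    have hxe : Commute x e := by
      have h1 : x * e = x * e * p := by
        conv_lhs => rw [hxp, mul_assoc, hpe.eq, ← mul_assoc]
      have h2 : x * e * p = x * c * e * x := by
        rw [hp, mul_assoc x e, ← mul_assoc e, ← hce.eq]; simp only [mul_assoc]
      have h3 : x * c * e * x = e * x := by
        rw [← hx1, hpe.eq, mul_assoc, hpx.eq, ← hxp]
      exact h1.trans (h2.trans h3)
    have hn0 : IsUnit (l • (1 : A) + c * (1 - p)) := by
      have : -l ∉ spectrum ℂ (c - c ^ 2 * x) := by
        rw [hx3]; simpa using hl0
      rw [spectrum.notMem_iff, hnq] at this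
      have := this.neg
      rwa [neg_sub, map_neg, sub_neg_eq_add, Algebra.algebraMap_eq_smul_one, add_comm] at this
    obtain ⟨u, hu⟩ := hn0
    have hub : Commute (u : A) b := by
      rw [hu]
      exact ((Commute.one_left b).smul_left l).add_left
        (hcb.mul_left ((Commute.one_left b).sub_left hpb))
    have hqq : (1 - p) * (1 - p) = 1 - p := by
      simp [mul_sub, sub_mul, hpp]
    have hbq : b * (1 - p) = u * (1 - p) := by
      rw [hu, hbc, add_mul, add_mul, mul_assoc, hqq]
    have huq : Commute (u : A) (1 - p) := by
      have : Commute p (u : A) := by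
        rw [hu]
        exact ((Commute.one_right p).smul_right l).add_right
          (hpc.mul_right ((Commute.one_right p).sub_right rfl))
      exact (Commute.one_right _).sub_right this.symm
    have hbq' : Commute b (1 - p) := (Commute.one_right _).sub_right hpb.symm
    have hiu : Commute (↑u⁻¹ : A) b := hub.units_inv_left
    have hff : (e * p) * (e * p) = e * p := by
      rw [mul_assoc, ← mul_assoc p, hpe.eq, mul_assoc, hpp, ← mul_assoc, hee]
    have hbf : Commute b (e * p) := hbe.mul_right hpb.symm
    refine ⟨e * p, y + e * ((1 - p) * ↑u⁻¹), hff, hbf,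
      hby.add_right (hbe.mul_right (hbq'.mul_right hiu.symm)), ?_, ?_⟩
    · rw [mul_add, hbye, ← mul_assoc, hbe.eq, mul_assoc, ← mul_assoc b, hbq, huq.eq, mul_assoc,
        Units.mul_inv, mul_one, mul_sub, mul_one]
      abel
    · intro m hm
      by_contra hcon
      simp only [Set.mem_union, Set.mem_sdiff, Set.mem_singleton_iff, Finset.coe_insert,
        Set.mem_insert_iff, not_or, not_and, not_not] at hcon
      obtain ⟨hm1, hm0⟩ := hcon
      apply hm
      rw [spectrum.mem_resolventSet_iff, Algebra.algebraMap_eq_smul_one]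
      have key : ∀ (g z : A), Commute g (e * p) → Commute z (e * p) → Commute z g → b * (e * p) = g * (e * p) →
          (m • (1 : A) - g) * z * (e * p) = e * p → IsUnit (m • (1 : A) - b * (e * p)) := by
        intro g z hgf hzf hzg hbg hz
        rw [hbg]
        set f := e * p
        refine aux_unit (b := z * f + m⁻¹ • (1 - f)) ?_ ?_
        · refine ((Commute.one_left _).smul_left m).sub_left ?_
          refine Commute.add_right ?_ (Commute.smul_right ?_ _)
          · exact (hzg.symm.mul_right hgf).mul_left (hzf.symm.mul_right rfl)
          · exact (Commute.one_right _).sub_right (hgf.mul_left rfl)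
        · have e1 : (m • (1 : A) - g * f) * (z * f) = f := by
            have : g * f * (z * f) = g * z * f := by
              rw [mul_assoc g, ← mul_assoc f, ← hzf.eq, mul_assoc z, hff, mul_assoc]
            rw [sub_mul, sub_mul, mul_assoc (m • (1 : A))] at hz
            rw [sub_mul, this, hz]
          have e2 : (m • (1 : A) - g * f) * (1 - f) = m • (1 - f) := by
            have : g * f * (1 - f) = 0 := by rw [mul_assoc, mul_sub, hff]; simp
            rw [sub_mul, this]; simp
          rw [mul_add, e1, mul_smul_comm, e2, smul_smul, inv_mul_cancel₀ hm0]
          simp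
      by_cases hml : m = l
      · subst hml
        have hxf : Commute x (e * p) := hxe.mul_right hpx.symm
        refine key b (-x) hbf hxf.neg_left hxb.neg_left rfl ?_
        have : (m • (1 : A) - b) * -x = p := by
          rw [hp, hc]; noncomm_ring
        rw [this, ← mul_assoc, hpe.eq, mul_assoc, hpp]
      · have hms : m ∉ spectrum ℂ (b * e) := by
          intro h
          rcases hsp h with h | h
          · exact h.2 (hm1 h.1 hml)
          · exact hm0 h
        rw [spectrum.notMem_iff, Algebra.algebraMap_eq_smul_one] at hms
        obtain ⟨v, hv⟩ := hms
        have hgf : Commute (b * e) (e * p) :=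
          hbf.mul_left ((Commute.refl e).mul_right hpe.symm)
        have hvc : ∀ d, Commute (b * e) d → Commute (↑v⁻¹ : A) d := fun d hd => by
          apply Commute.units_inv_left
          rw [hv]
          exact ((Commute.one_left d).smul_left m).sub_left hd
        refine key (b * e) ↑v⁻¹ hgf (hvc _ hgf) (hvc _ rfl) ?_ ?_
        · rw [mul_assoc b e, ← mul_assoc e e, hee]
        · rw [← hv, Units.mul_inv, one_mul]

lemma aux_nontrivial {A : Type*} [NormedRing A] [NormedAlgebra ℂ A] {a : A}
    (h : IsQuasinilpotent a) : Nontrivial A := by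
  by_contra hA
  rw [not_nontrivial_iff_subsingleton] at hA
  have : (0 : ℂ) ∈ spectrum ℂ a := by rw [h]; rfl
  exact this (isUnit_of_subsingleton _)

lemma aux_b {A : Type*} [NormedRing A] [NormedAlgebra ℂ A] [CompleteSpace A] (b : A)
    (hb : MemAcc b) (hf : (spectrum ℂ b).Finite) : IsGDrazinInv b := by
  classical
  obtain ⟨_, -, -, hq⟩ := hb 1 one_ne_zero
  have := aux_nontrivial hq
  obtain ⟨e, y, hee, hbe, hby, hbye, hsp⟩ := aux_main b hb (hf.toFinset.erase 0)
    (fun l hl => Finset.ne_of_mem_erase hl)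
  have hye : Commute y e := by
    have : e = 1 - b * y := by rw [hbye]; abel
    rw [this]
    exact (Commute.one_right _).sub_right (hby.symm.mul_right rfl)
  have hqq : (1 - e) * (1 - e) = 1 - e := by
    simp [mul_sub, sub_mul, hee]
  have hyq : Commute y (1 - e) := (Commute.one_right _).sub_right hye
  have hbq : Commute b (1 - e) := (Commute.one_right _).sub_right hbe
  refine ⟨y * (1 - e), hby.mul_right hbq, ?_, ?_⟩
  · rw [mul_assoc, ← mul_assoc b, hbye, hqq, mul_assoc, hqq]
  · have : b - b ^ 2 * (y * (1 - e)) = b * e := by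
      rw [pow_two, mul_assoc, ← mul_assoc b y, hbye, hqq]; noncomm_ring
    rw [this]
    apply Set.Subset.antisymm_iff.mpr
    have hsub : spectrum ℂ (b * e) ⊆ {0} := by
      intro m hm
      rcases hsp hm with h | h
      · by_contra h0
        exact h.2 (by simpa using And.intro h.1 h0)
      · exact h
    refine ⟨hsub, ?_⟩
    obtain ⟨m, hm⟩ := spectrum.nonempty (b * e)
    have : m = 0 := hsub hm
    simpa [this] using hm

theorem agDrazin_finite_spectrum_iff_gDrazin {A : Type*} [NormedRing A] [NormedAlgebra ℂ A]
    [CompleteSpace A] (a : A) :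
    (∃ x : A, IsAgDrazinInverseOf x a ∧ (spectrum ℂ (a - a ^ 2 * x)).Finite) ↔
      IsGDrazinInv a := by
  constructor
  · rintro ⟨x, ⟨hax, hxax, hacc⟩, hfin⟩
    obtain ⟨y, hby, hyby, hq⟩ := aux_b _ hacc hfin
    set b := a - a ^ 2 * x with hb
    set p := 1 - a * x with hp
    have hcax : Commute a x := hax
    have hap : Commute a p := (Commute.one_right _).sub_right ((Commute.refl a).mul_right hcax)
    have hbp : b = a * p := by rw [hb, hp]; noncomm_ring
    have hxp : x * p = 0 := by rw [hp, mul_sub, mul_one, ← mul_assoc, hxax, sub_self]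
    have hpx : p * x = 0 := by rw [hp, sub_mul, one_mul, hax, hxax, sub_self]
    have hpp : p * p = p := by
      nth_rw 1 [hp]; rw [sub_mul, one_mul, mul_assoc, hxp, mul_zero, sub_zero]
    have hbpb : b * p = b := by rw [hbp, mul_assoc, hpp]
    have hpb : p * b = b := by rw [hbp, ← mul_assoc, ← hap.eq, mul_assoc, hpp]
    have hyp : y * p = y := by
      conv_lhs => rw [← hyby, mul_assoc y, hby, mul_assoc y, mul_assoc y, hbpb]
      rw [← hby, ← mul_assoc, hyby]
    have hpy : p * y = y := by
      conv_lhs => rw [← hyby, ← hby, ← mul_assoc, ← mul_assoc, hpb]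
      rw [hby, hyby]
    have hyx : y * x = 0 := by rw [← hyp, mul_assoc, hpx, mul_zero]
    have hxy : x * y = 0 := by rw [← hpy, ← mul_assoc, hxp, zero_mul]
    have hay : a * y = b * y := by rw [hbp, mul_assoc, hpy]
    have hya : y * a = y * b := by rw [hbp, hap.eq, ← mul_assoc, hyp]
    refine ⟨x + y, ?_, ?_, ?_⟩
    · rw [mul_add, add_mul, hax, hay, hya, hby]
    · have e1 : (x + y) * a = a * x + y * b := by rw [add_mul, hya, hax]
      rw [e1, add_mul, mul_add, mul_add, mul_assoc a x y, hxy, hyby, ← hby, mul_assoc b y x, hyx,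
        hax, hxax]
      simp
    · have : a - a ^ 2 * (x + y) = b - b ^ 2 * y := by
        have : a ^ 2 * y = b ^ 2 * y := by
          rw [pow_two, mul_assoc, hay, hby, ← mul_assoc, hay, pow_two, mul_assoc b b y, hby,
            ← mul_assoc, hby]
        rw [mul_add, this, hb]; abel
      rw [this]; exact hq
  · rintro ⟨x, h1, h2, h3⟩
    have := aux_nontrivial h3
    refine ⟨x, ⟨h1, h2, ?_⟩, by rw [h3]; exact Set.finite_singleton 0⟩
    intro l hl
    have : l ∉ spectrum ℂ (a - a ^ 2 * x) := by rw [h3]; simpa using hl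
    rw [spectrum.notMem_iff, Algebra.algebraMap_eq_smul_one] at this
    have := this.neg
    rw [neg_sub] at this
    obtain ⟨u, hu⟩ := this
    rw [← hu]
    refine ⟨↑u⁻¹, by simp, by simp, ?_⟩
    rw [pow_two, mul_assoc, Units.mul_inv, mul_one, sub_self]
    exact spectrum.zero_eq
end

section
/- Let A be a complex unital Banach algebra and let a ∈ A be ag-Drazin invertible such that no ag-Drazin inverse x of a satisfies that σ(a − a²x) is finite. Then there exists a sequence (λₙ) of nonzero isolated points of the spectrum σ(a) which converges to 0. -/
open Filter Topology

theorem gd_aux {A : Type*} [NormedRing A]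
    [NormedAlgebra ℂ A] [CompleteSpace A] (a x : A) (h1 : a * x = x * a) (h2 : x * a * x = x) :
    ∃ δ : ℝ, 0 < δ ∧ ∀ l : ℂ, l ≠ 0 → ‖l‖ < δ →
      (l ∈ spectrum ℂ a ↔ l ∈ spectrum ℂ (a - a ^ 2 * x)) := by
  have hax : a * (x * x) = x := by rw [← mul_assoc, h1, h2]
  have hxx : x * (a * x) = x := by rw [← mul_assoc, h2]
  have hc : Commute a x := h1
  refine ⟨(‖x‖ + 1)⁻¹, by positivity, fun l hl hlt => ?_⟩
  have hw : IsUnit (1 - l • x) := by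
    apply isUnit_one_sub_of_norm_lt_one
    rw [norm_smul]
    have hp : 0 < ‖x‖ + 1 := by positivity
    have := mul_lt_mul_of_pos_right hlt hp
    rw [inv_mul_cancel₀ hp.ne'] at this
    nlinarith [norm_nonneg l, norm_pos_iff.2 hl]
  have hcu : Commute (1 - l⁻¹ • (a * a * x)) (1 - a * x - l • x) := by
    have k1 : Commute (a * a * x) (a * x) :=
      ((Commute.refl a).mul_right hc |>.mul_left ((Commute.refl a).mul_right hc)).mul_left
        ((hc.symm).mul_right (Commute.refl x))
    have k2 : Commute (a * a * x) x := (hc.mul_left hc).mul_left (Commute.refl x)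
    exact (Commute.one_left _).sub_left
      ((((Commute.one_right _).sub_right k1).sub_right (k2.smul_right l)).smul_left l⁻¹)
  have e1 : a * a * x * (a * x) = a * a * x := by rw [mul_assoc (a * a), hxx]
  have e2 : a * a * x * x = a * x := by rw [mul_assoc, mul_assoc, hax]
  have hprod : (1 - l⁻¹ • (a * a * x)) * (1 - a * x - l • x) = 1 - l • x := by
    simp only [sub_mul, mul_sub, one_mul, mul_one, smul_mul_assoc, mul_smul_comm, e1, e2]
    rw [smul_sub, smul_inv_smul₀ hl]; abel
  have hu : IsUnit (1 - l⁻¹ • (a * a * x)) := by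
    rw [← hprod] at hw
    exact (hcu.isUnit_mul_iff.1 hw).1
  have e3 : a * (a * a * x) = a ^ 2 * x * (a * a * x) := by
    have : x * (a * a * x) = a * x := by
      rw [← mul_assoc, ← mul_assoc, ← h1, mul_assoc, mul_assoc, hxx]
    rw [mul_assoc (a ^ 2), this, pow_two]; simp only [mul_assoc]
  have hfac : (algebraMap ℂ A l - (a - a ^ 2 * x)) * (1 - l⁻¹ • (a * a * x))
      = algebraMap ℂ A l - a := by
    simp only [Algebra.algebraMap_eq_smul_one, sub_mul, mul_sub, mul_one, smul_mul_assoc,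
      mul_smul_comm, one_mul, e3]
    rw [sub_self, sub_zero, inv_smul_smul₀ hl, pow_two]; abel
  rw [spectrum.mem_iff, spectrum.mem_iff, ← hfac, not_iff_not]
  obtain ⟨u, hu⟩ := hu
  rw [← hu, Units.isUnit_mul_units]

theorem acc_aux {A : Type*} [NormedRing A]
    [NormedAlgebra ℂ A] [CompleteSpace A] (b : A) (hb : MemAcc b) (l : ℂ) (hl : l ≠ 0) :
    ¬ AccPt l (𝓟 (spectrum ℂ b)) := by
  obtain ⟨y, h1, h2, h3⟩ := hb l hl
  obtain ⟨δ, hδ, h⟩ := gd_aux _ y h1 h2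
  rw [accPt_iff_frequently]
  intro hf
  obtain ⟨z, ⟨hz, hzs⟩, hzb⟩ := (hf.and_eventually (Metric.ball_mem_nhds l hδ)).exists
  have hzl : z - l ≠ 0 := sub_ne_zero.2 hz
  have := (h (z - l) hzl (by simpa [dist_eq_norm] using hzb)).1 (by
    rw [spectrum.mem_iff] at hzs ⊢
    convert hzs using 2
    simp only [Algebra.algebraMap_eq_smul_one, sub_smul]; abel)
  rw [h3] at this
  exact hzl this

theorem exists_seq_isolated_spectrum_tendsto_zero {A : Type*} [NormedRing A]
    [NormedAlgebra ℂ A] [CompleteSpace A] (a : A)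
    (ha : IsAgDrazinInv a)
    (hcard : ∀ x : A, IsAgDrazinInverseOf x a → ¬ (spectrum ℂ (a - a ^ 2 * x)).Finite) :
    ∃ lam : ℕ → ℂ,
      (∀ n, lam n ≠ 0 ∧ lam n ∈ spectrum ℂ a ∧ ¬ AccPt (lam n) (𝓟 (spectrum ℂ a))) ∧
      Tendsto lam atTop (𝓝 0) := by
  obtain ⟨x, hx⟩ := ha
  have hinf := hcard x hx
  obtain ⟨h1, h2, h3⟩ := hx
  obtain ⟨δ, hδ, h⟩ := gd_aux a x h1 h2
  have hacc : AccPt (0 : ℂ) (𝓟 (spectrum ℂ (a - a ^ 2 * x))) := by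
    obtain ⟨z, _, hz⟩ := Set.Infinite.exists_accPt_of_subset_isCompact (K := spectrum ℂ (a - a ^ 2 * x)) hinf
      (spectrum.isCompact _) subset_rfl
    by_cases hz0 : z = 0
    · rwa [hz0] at hz
    · exact absurd hz (acc_aux _ h3 z hz0)
  rw [accPt_iff_frequently] at hacc
  have key : ∀ n : ℕ, ∃ z : ℂ, (z ≠ 0 ∧ z ∈ spectrum ℂ (a - a ^ 2 * x)) ∧
      ‖z‖ < min δ (1 / ((n : ℝ) + 1)) := fun n => by
    have hpos : 0 < min δ (1 / ((n : ℝ) + 1)) := lt_min hδ (by positivity)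
    obtain ⟨z, hz, hzb⟩ := (hacc.and_eventually (Metric.ball_mem_nhds 0 hpos)).exists
    exact ⟨z, hz, by simpa using hzb⟩
  choose lam hlam hn using key
  refine ⟨lam, fun n => ⟨(hlam n).1, ?_, ?_⟩, ?_⟩
  · exact (h _ (hlam n).1 ((hn n).trans_le (min_le_left _ _))).2 (hlam n).2
  · intro hA
    apply acc_aux _ h3 _ (hlam n).1
    rw [accPt_iff_frequently] at hA ⊢
    have e1 : ∀ᶠ z in 𝓝 (lam n), z ≠ 0 := eventually_ne_nhds (hlam n).1
    have e2 : ∀ᶠ z in 𝓝 (lam n), ‖z‖ < δ :=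
      continuous_norm.continuousAt.eventually_lt continuousAt_const
        ((hn n).trans_le (min_le_left _ _))
    exact (hA.and_eventually (e1.and e2)).mono fun z hz =>
      ⟨hz.1.1, (h z hz.2.1 hz.2.2).1 hz.1.2⟩
  · exact squeeze_zero_norm (fun n => (hn n).le.trans (min_le_right _ _))
      tendsto_one_div_add_atTop_nhds_zero_nat
end

section
/- Let A be a complex unital Banach algebra and a ∈ A. Then a is ag-Drazin invertible if and only if there exists an idempotent p in the double commutant of a (i.e., p commutes with every element of A that commutes with a) such that a + p is invertible in A and ap ∈ A^acc. -/
open Filter Topology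

open scoped NNReal ENNReal

namespace AgD

theorem comm_lift.{u} {A : Type u} [Ring A] (s : Set A) (h : ∀ x ∈ s, ∀ y ∈ s, x * y = y * x) :
    ∃ (R : Type u) (_ : CommRing R) (f : R →+* A), Function.Injective f ∧ ∀ x ∈ s, ∃ y, f y = x := by
  have := Subring.isMulCommutative_closure h
  exact ⟨Subring.closure s, { mul_comm := fun x y => this.is_comm.comm x y }, (Subring.closure s).subtype, Subtype.val_injective,
    fun x hx => ⟨⟨x, Subring.subset_closure hx⟩, rfl⟩⟩

theorem lift5.{u} {A : Type u} [Ring A] (a b c d e : A) (h1 : a * b = b * a) (h2 : a * c = c * a)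
    (h3 : a * d = d * a) (h4 : a * e = e * a) (h5 : b * c = c * b) (h6 : b * d = d * b)
    (h7 : b * e = e * b) (h8 : c * d = d * c) (h9 : c * e = e * c) (h10 : d * e = e * d) :
    ∃ (R : Type u) (_ : CommRing R) (f : R →+* A), Function.Injective f ∧
      ∃ a' b' c' d' e', f a' = a ∧ f b' = b ∧ f c' = c ∧ f d' = d ∧ f e' = e := by
  obtain ⟨R, i, f, hf, h⟩ := comm_lift ({a, b, c, d, e} : Set A) (by
    rintro x (rfl | rfl | rfl | rfl | rfl) y (rfl | rfl | rfl | rfl | rfl) <;> simp_all)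
  obtain ⟨a', ha⟩ := h a (by simp)
  obtain ⟨b', hb⟩ := h b (by simp)
  obtain ⟨c', hc⟩ := h c (by simp)
  obtain ⟨d', hd⟩ := h d (by simp)
  obtain ⟨e', he⟩ := h e (by simp)
  exact ⟨R, i, f, hf, a', b', c', d', e', ha, hb, hc, hd, he⟩

theorem isUnit_of_comm {A : Type*} [Ring A] {u v : A} (h : u * v = 1) (hc : u * v = v * u) :
    IsUnit u := ⟨⟨u, v, h, hc ▸ h⟩, rfl⟩

theorem unit_inv {A : Type*} [Ring A] {u : A} (h : IsUnit u) :
    ∃ g, u * g = 1 ∧ g * u = 1 ∧ ∀ y, u * y = y * u → g * y = y * g := by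
  obtain ⟨u, rfl⟩ := h
  refine ⟨(u⁻¹ : Aˣ), by simp, by simp, fun y hy => ?_⟩
  exact (Commute.units_inv_left (show Commute (u : A) y from hy)).eq

theorem unit_alg {A : Type*} [Ring A] (b e g L M : A) (h1 : b * e = e * b) (h2 : g * e = e * g)
    (h6 : b * g = g * b) (h3 : L * M = 1) (h4 : e * e = e)
    (h5 : (b - L) * (g * e) = e) (hM : ∀ y, M * y = y * M) (hL : ∀ y, L * y = y * L) :
    IsUnit (b * e - L) := by
  obtain ⟨R, _, f, hf, b, e, g, L, M, rfl, rfl, rfl, rfl, rfl⟩ := lift5 b e g L M h1 h6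
    (hL _).symm (hM _).symm h2.symm (hL _).symm (hM _).symm (hL _).symm (hM _).symm (hL _)
  simp only [← map_mul, ← map_sub, ← map_one f, hf.eq_iff] at h3 h4 h5 ⊢
  apply IsUnit.map
  apply IsUnit.of_mul_eq_one (g * e - M * (1 - e))
  grind

theorem sc {A : Type*} [NormedRing A] [NormedAlgebra ℂ A] (l : ℂ) (y : A) :
    (l • (1 : A)) * y = y * (l • (1 : A)) := by simp

theorem sc_inv {A : Type*} [NormedRing A] [NormedAlgebra ℂ A] (l : ℂ) (hl : l ≠ 0) :
    (l • (1 : A)) * (l⁻¹ • (1 : A)) = 1 := by simp [hl, smul_smul]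

section
variable {A : Type*} [NormedRing A] [NormedAlgebra ℂ A]

theorem mem_sp (b : A) (l : ℂ) : l ∈ spectrum ℂ b ↔ ¬ IsUnit (b - l • (1 : A)) := by
  rw [spectrum.mem_iff, Algebra.algebraMap_eq_smul_one, IsUnit.sub_iff]

theorem qn_iff [CompleteSpace A] [Nontrivial A] (b : A) :
    IsQuasinilpotent b ↔ ∀ l : ℂ, l ≠ 0 → IsUnit (b - l • (1 : A)) := by
  unfold IsQuasinilpotent
  constructor
  · intro h l hl
    by_contra hc
    rw [← mem_sp, h] at hc
    exact hl hc
  · intro h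
    obtain ⟨l, hl⟩ := spectrum.nonempty b
    have key : ∀ m ∈ spectrum ℂ b, m = 0 := by
      intro m hm
      by_contra hc
      exact (mem_sp b m).1 hm (h m hc)
    ext m
    refine ⟨fun hm => key m hm, fun hm => ?_⟩
    rw [Set.mem_singleton_iff.1 hm, ← key l hl]; exact hl

theorem qn_sr {b : A} (h : IsQuasinilpotent b) : spectralRadius ℂ b = 0 := by
  unfold IsQuasinilpotent at h
  simp [spectralRadius, h]

theorem unit_mul_idem (b e : A) (l : ℂ) (hl : l ≠ 0) (h1 : b * e = e * b) (h4 : e * e = e)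
    (h : IsUnit (b - l • (1 : A))) : IsUnit (b * e - l • (1 : A)) := by
  obtain ⟨g, g1, g2, g3⟩ := unit_inv h
  refine unit_alg b e g _ _ h1 (g3 e ?_) (g3 b ?_).symm (sc_inv l hl) h4 ?_ (sc _) (sc _)
  · rw [sub_mul, mul_sub, h1, sc]
  · rw [sub_mul, mul_sub, sc]
  · rw [← mul_assoc, g1, one_mul]

theorem small [CompleteSpace A] {B C : A} {k : ℝ≥0} (h1 : spectralRadius ℂ B < k)
    (h2 : k * ‖C‖₊ < 1) : ∃ n : ℕ, ‖B ^ n‖ * ‖C ^ n‖ < 1 := by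
  have ht := spectrum.pow_nnnorm_pow_one_div_tendsto_nhds_spectralRadius B
  obtain ⟨n, hn, hn1⟩ := ((ht.eventually (gt_mem_nhds h1)).and (eventually_ge_atTop 1)).exists
  refine ⟨n, ?_⟩
  have hn0 : (n : ℝ) ≠ 0 := by exact_mod_cast (by omega : n ≠ 0)
  have h3 : ((‖B ^ n‖₊ : ℝ≥0∞)) < (k : ℝ≥0∞) ^ n := by
    have := ENNReal.rpow_lt_rpow hn (show (0 : ℝ) < n by exact_mod_cast hn1)
    rw [← ENNReal.rpow_mul, one_div_mul_cancel hn0, ENNReal.rpow_one, ENNReal.rpow_natCast] at this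
    exact this
  have h4 : ‖B ^ n‖₊ < k ^ n := by exact_mod_cast h3
  have h5 : ‖C ^ n‖₊ ≤ ‖C‖₊ ^ n := nnnorm_pow_le' C (by omega)
  have : ‖B ^ n‖₊ * ‖C ^ n‖₊ < 1 := by
    calc ‖B ^ n‖₊ * ‖C ^ n‖₊ ≤ k ^ n * ‖C‖₊ ^ n := mul_le_mul' h4.le h5
      _ = (k * ‖C‖₊) ^ n := (mul_pow _ _ _).symm
      _ < 1 := pow_lt_one₀ zero_le h2 (by omega)
  exact_mod_cast this

theorem small0 [CompleteSpace A] {B C : A} (h1 : spectralRadius ℂ B = 0) :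
    ∃ n : ℕ, ‖B ^ n‖ * ‖C ^ n‖ < 1 := by
  refine small (k := (‖C‖₊ + 1)⁻¹) ?_ ?_
  · rw [h1]; simp
  · rw [inv_mul_lt_iff₀ (by positivity)]; simp

theorem sand {B C z : A} (h : z = B * z * C) (hn : ∃ n : ℕ, ‖B ^ n‖ * ‖C ^ n‖ < 1) : z = 0 := by
  obtain ⟨n, hn⟩ := hn
  have h1 : ∀ n : ℕ, z = B ^ n * z * C ^ n := by
    intro n
    induction n with
    | zero => simp
    | succ n ih =>
      calc z = B ^ n * z * C ^ n := ih
        _ = B ^ n * (B * z * C) * C ^ n := by rw [← h]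
        _ = _ := by rw [pow_succ, pow_succ']; simp only [mul_assoc]
  have h2 : ‖z‖ ≤ ‖B ^ n‖ * ‖C ^ n‖ * ‖z‖ := by
    calc ‖z‖ = ‖B ^ n * z * C ^ n‖ := by rw [← h1]
      _ ≤ ‖B ^ n‖ * ‖z‖ * ‖C ^ n‖ := (norm_mul_le _ _).trans (by gcongr; exact norm_mul_le _ _)
      _ = _ := by ring
  by_contra hz
  have := norm_pos_iff.2 hz
  nlinarith

theorem comm_of_corner {q y : A} (h1 : q * y * (1 - q) = 0) (h2 : (1 - q) * y * q = 0) :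
    q * y = y * q := by
  have h3 : q * y = q * y * q := by rw [mul_sub, mul_one, sub_eq_zero] at h1; exact h1
  have h4 : y * q = q * y * q := by
    rw [sub_mul, sub_mul, one_mul, sub_eq_zero] at h2; exact h2
  exact h3.trans h4.symm

theorem gd_bicomm [CompleteSpace A] {d x : A} (h1 : d * x = x * d) (h2 : x * d * x = x)
    (h3 : IsQuasinilpotent (d - d ^ 2 * x)) (y : A) (hy : d * y = y * d) : x * y = y * x := by
  have e1 : (d - d ^ 2 * x) * (1 - d * x) = (1 - d * x) * d ∧
      (1 - d * x) * (d - d ^ 2 * x) = d * (1 - d * x) ∧ d * (d * x * x) = d * x ∧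
      x * (d * x) * d = d * x := by
    obtain ⟨R, _, f, hf, d, x, -, -, -, rfl, rfl, -, -, -⟩ := lift5 d x 0 0 0 h1
      (by simp) (by simp) (by simp) (by simp) (by simp) (by simp) (by simp) (by simp) (by simp)
    simp only [← map_mul, ← map_sub, ← map_pow, ← map_one f, hf.eq_iff] at h2 ⊢
    refine ⟨?_, ?_, ?_, ?_⟩ <;> grind
  obtain ⟨e1, e2, e3, e4⟩ := e1
  have sr := qn_sr h3
  set n := d - d ^ 2 * x with hn
  set q := 1 - d * x with hq
  have hdx : d * x = 1 - q := by rw [hq]; abel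
  have z1 : q * y * (d * x) = 0 := by
    refine sand (B := n) (C := x) ?_ (small0 sr)
    calc q * y * (d * x) = q * y * (d * (d * x * x)) := by rw [e3]
      _ = q * (y * d) * (d * x * x) := by simp only [mul_assoc]
      _ = (q * d) * y * (d * x * x) := by rw [← hy]; simp only [mul_assoc]
      _ = _ := by rw [← e1]; simp only [mul_assoc]
  have z2 : (d * x) * y * q = 0 := by
    refine sand (B := x) (C := n) ?_ ?_
    · calc (d * x) * y * q = (x * (d * x) * d) * y * q := by rw [e4]
        _ = x * (d * x) * (d * y) * q := by simp only [mul_assoc]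
        _ = x * (d * x) * y * (d * q) := by rw [hy]; simp only [mul_assoc]
        _ = _ := by rw [← e2]; simp only [mul_assoc]
    · obtain ⟨n, hn⟩ := small0 (C := x) sr
      exact ⟨n, by rwa [mul_comm]⟩
  rw [hdx] at z1 z2
  have hqy := comm_of_corner z1 z2
  have hc : (d * x) * y = y * (d * x) := by
    rw [hdx, sub_mul, mul_sub, hqy, one_mul, mul_one]
  calc x * y = x * (d * x * y) := by rw [← mul_assoc, ← mul_assoc, h2]
    _ = x * (y * d) * x := by rw [hc]; simp only [mul_assoc]
    _ = (d * x * y) * x := by rw [← hy, h1]; simp only [mul_assoc]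
    _ = y * (x * d * x) := by rw [hc, h1]; simp only [mul_assoc]
    _ = y * x := by rw [h2]

theorem acc_mul [CompleteSpace A] [Nontrivial A] {b e : A} (hb : MemAcc b) (h1 : b * e = e * b)
    (h4 : e * e = e) : MemAcc (b * e) := by
  intro l hl
  obtain ⟨x, x1, x2, x3⟩ := hb l hl
  have hde : (b - l • (1 : A)) * e = e * (b - l • (1 : A)) := by rw [sub_mul, mul_sub, h1, sc]
  have hxe := gd_bicomm x1 x2 x3 e hde
  refine ⟨x * e - (l⁻¹ • (1 : A)) * (1 - e), ?_⟩
  have key : (b * e - l • (1 : A)) * (x * e - (l⁻¹ • (1 : A)) * (1 - e)) =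
        (x * e - (l⁻¹ • (1 : A)) * (1 - e)) * (b * e - l • (1 : A)) ∧
      (x * e - (l⁻¹ • (1 : A)) * (1 - e)) * (b * e - l • (1 : A)) *
        (x * e - (l⁻¹ • (1 : A)) * (1 - e)) = x * e - (l⁻¹ • (1 : A)) * (1 - e) ∧
      (b * e - l • (1 : A)) - (b * e - l • (1 : A)) ^ 2 * (x * e - (l⁻¹ • (1 : A)) * (1 - e)) =
       ((b - l • (1 : A)) - (b - l • (1 : A)) ^ 2 * x) * e ∧
      ((b - l • (1 : A)) - (b - l • (1 : A)) ^ 2 * x) * e = 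
       e * ((b - l • (1 : A)) - (b - l • (1 : A)) ^ 2 * x) := by
    have hLM := sc_inv (A := A) l hl
    have hbx : b * x = x * b := by
      rw [sub_mul, mul_sub, sc] at x1
      exact sub_left_injective x1
    have c1 := sc (A := A) l
    have c2 := sc (A := A) l⁻¹
    clear x3 hb
    generalize l • (1 : A) = L at *
    generalize l⁻¹ • (1 : A) = M at *
    obtain ⟨R, _, f, hf, b, e, x, L, M, rfl, rfl, rfl, rfl, rfl⟩ := lift5 b e x L M h1 hbx
      (c1 _).symm (c2 _).symm hxe.symm (c1 _).symm (c2 _).symm (c1 _).symm (c2 _).symm (c1 _)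
    simp only [← map_mul, ← map_sub, ← map_pow, ← map_one f, hf.eq_iff] at hLM h4 x2 ⊢
    refine ⟨mul_comm _ _, ?_, ?_, mul_comm _ _⟩ <;> grind
  obtain ⟨k1, k2, k3, k4⟩ := key
  refine ⟨k1, k2, ?_⟩
  rw [k3, qn_iff]
  intro m hm
  exact unit_mul_idem _ _ _ hm k4 h4 ((qn_iff _).1 x3 m hm)

theorem gd_isolated [CompleteSpace A] [Nontrivial A] {d : A} (h : IsGDrazinInv d) :
    ∀ᶠ l : ℂ in 𝓝[≠] 0, IsUnit (d - l • (1 : A)) := by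
  obtain ⟨x, x1, x2, x3⟩ := h
  have hev : ∀ᶠ l : ℂ in 𝓝 0, IsUnit (1 - (l • (1 : A)) * x) := by
    have hc : Continuous fun l : ℂ => 1 - (l • (1 : A)) * x := by fun_prop
    exact hc.continuousAt.eventually_mem (Units.isOpen.mem_nhds (by simp))
  filter_upwards [nhdsWithin_le_nhds hev, self_mem_nhdsWithin] with l h1 hl
  have h2 := (qn_iff _).1 x3 l hl
  obtain ⟨V, V1, V2, V3⟩ := unit_inv h1
  obtain ⟨U, U1, U2, U3⟩ := unit_inv h2
  have c1 := sc (A := A) l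
  generalize l • (1 : A) = L at *
  have e1 : (1 - L * x) * d = d * (1 - L * x) := by
    rw [sub_mul, mul_sub, ← mul_assoc, ← c1 d, mul_assoc, mul_assoc, x1]; simp
  have e2 : (1 - L * x) * x = x * (1 - L * x) := by
    rw [sub_mul, mul_sub, ← mul_assoc, ← c1 x, mul_assoc]; simp
  have e3 : (d - d ^ 2 * x - L) * d = d * (d - d ^ 2 * x - L) := by
    have : d ^ 2 * x * d = d * (d ^ 2 * x) := by rw [mul_assoc, ← x1]; noncomm_ring
    rw [sub_mul, mul_sub, sub_mul, mul_sub, c1, this]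
  have e4 : (d - d ^ 2 * x - L) * x = x * (d - d ^ 2 * x - L) := by
    have : d ^ 2 * x * x = x * (d ^ 2 * x) := by
      rw [pow_two, ← mul_assoc x, ← mul_assoc x, ← x1, mul_assoc d x d, ← x1]
      simp only [mul_assoc]
    rw [sub_mul, mul_sub, sub_mul, mul_sub, c1, this, x1]
  have e5 : U * V = V * U := by
    apply U3
    symm
    apply V3
    have g1 := e1
    have g2 := e2
    have : Commute (1 - L * x) (d - d ^ 2 * x - L) :=
      Commute.sub_right (Commute.sub_right g1 ((Commute.pow_right g1 2).mul_right g2)) (c1 _).symm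
    exact this.eq
  obtain ⟨R, _, f, hf, d, x, U, V, L, rfl, rfl, rfl, rfl, rfl⟩ := lift5 d x U V L x1
      (U3 _ e3).symm (V3 _ e1).symm (c1 _).symm (U3 _ e4).symm (V3 _ e2).symm (c1 _).symm e5
      (c1 _).symm (c1 _).symm
  simp only [← map_mul, ← map_sub, ← map_pow, ← map_one f, hf.eq_iff] at x2 V1 U1 ⊢
  apply IsUnit.map
  apply IsUnit.of_mul_eq_one (U * (1 - d * x) + x * V)
  have t1 : (d - L) * (1 - d * x) = (d - d ^ 2 * x - L) * (1 - d * x) := by grind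
  have t2 : (d - L) * x = d * x * (1 - L * x) := by grind
  linear_combination U * t1 + V * t2 + (1 - d * x) * U1 + d * x * V1

/-- The property carried along the induction. -/
def Good (r : ℝ≥0) (a p : A) : Prop :=
  p * p = p ∧ a * p = p * a ∧ MemAcc (a * p) ∧ IsUnit (a * (1 - p) + p) ∧
    ∀ u c : A, u * u = u → a * u = u * a → spectralRadius ℂ (a * u) < r → a * c = c * a →
      u * c * (1 - p) = 0 ∧ (1 - p) * c * u = 0

theorem step [CompleteSpace A] [Nontrivial A] {r : ℝ≥0} {a p : A} (hG : Good r a p) (l : ℂ)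
    (hl : l ≠ 0) (hr : r ≤ ‖l‖₊) :
    ∃ p' : A, Good r a p' ∧ IsUnit (a * p' - l • (1 : A)) ∧
      ∀ m : ℂ, m ≠ 0 → IsUnit (a * p - m • (1 : A)) → IsUnit (a * p' - m • (1 : A)) := by
  obtain ⟨hpp, hap, hacc, hun, hQ⟩ := hG
  obtain ⟨x, x1, x2, x3⟩ := hacc l hl
  have c1 := sc (A := A) l
  have bic := gd_bicomm x1 x2 x3
  have hxa : x * a = a * x := by
    apply bic
    rw [sub_mul, mul_sub, c1, mul_assoc, ← hap]
  have hxp : x * p = p * x := by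
    apply bic
    rw [sub_mul, mul_sub, c1, mul_assoc, ← mul_assoc p, ← hap, mul_assoc]
  have hU := (qn_iff _).1 x3 (-l) (neg_ne_zero.2 hl)
  have hU' : IsUnit (a * p - l • (1 : A) - (a * p - l • (1 : A)) ^ 2 * x + l • (1 : A)) := by
    simpa using hU
  obtain ⟨t, t1, t2, t3⟩ := unit_inv hU'
  have hLM := sc_inv (A := A) l hl
  have c2 := sc (A := A) l⁻¹
  have sr := qn_sr x3
  have hunit : ∀ u : A, spectralRadius ℂ (a * u) < r → IsUnit (a * u - l • (1 : A)) := by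
    intro u hu
    by_contra hc
    rw [← mem_sp] at hc
    apply hc
    exact spectrum.mem_resolventSet_of_spectralRadius_lt (hu.trans_le (by exact_mod_cast hr))
  -- commutation with `t`
  have tcomm : ∀ y, y * a = a * y → y * p = p * y → y * x = x * y → t * y = y * t := by
    intro y y1 y2 y3
    apply t3
    have g : Commute (a * p - l • (1 : A)) y :=
      Commute.sub_left (Commute.mul_left (show Commute a y from y1.symm) y2.symm) (c1 y)
    have : Commute (a * p - l • (1 : A) - (a * p - l • (1 : A)) ^ 2 * x + l • (1 : A)) y :=
      Commute.add_left (Commute.sub_left g ((g.pow_left 2).mul_left y3.symm)) (c1 y)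
    exact this.eq
  have ta := tcomm a rfl hap hxa.symm
  have tp := tcomm p hap.symm rfl hxp.symm
  have tx := tcomm x hxa hxp rfl
  have key : ∀ M : A, M * a = a * M → M * p = p * M → M * x = x * M →
      l • (1 : A) * M = M * (l • (1 : A)) →
      (p * ((a * p - l • (1 : A)) * x)) * (p * ((a * p - l • (1 : A)) * x)) =
          (p * ((a * p - l • (1 : A)) * x)) ∧
      a * (p * ((a * p - l • (1 : A)) * x)) = (p * ((a * p - l • (1 : A)) * x)) * a ∧
      a * p * ((a * p - l • (1 : A)) * x) = ((a * p - l • (1 : A)) * x) * (a * p) ∧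
      ((a * p - l • (1 : A)) * x) * ((a * p - l • (1 : A)) * x) = ((a * p - l • (1 : A)) * x) ∧
      x * ((a * p - l • (1 : A)) * x) = ((a * p - l • (1 : A)) * x) * x ∧
      (a * p) * x = x * (a * p) ∧
      (a * p - l • (1 : A)) * (x * ((a * p - l • (1 : A)) * x)) = (a * p - l • (1 : A)) * x ∧
      1 - p * ((a * p - l • (1 : A)) * x) = (1 - p) + p * (1 - (a * p - l • (1 : A)) * x) ∧
      (p * (1 - (a * p - l • (1 : A)) * x)) *
        (a * p - l • (1 : A) - (a * p - l • (1 : A)) ^ 2 * x) =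
        (a - l • (1 : A)) * (p * (1 - (a * p - l • (1 : A)) * x)) ∧
      (a * p - l • (1 : A) - (a * p - l • (1 : A)) ^ 2 * x) *
        (p * (1 - (a * p - l • (1 : A)) * x)) =
        (p * (1 - (a * p - l • (1 : A)) * x)) * (a - l • (1 : A)) ∧
      a * (1 - p * ((a * p - l • (1 : A)) * x)) + p * ((a * p - l • (1 : A)) * x) =
        (a * (1 - p) + p) * (1 - p * (1 - (a * p - l • (1 : A)) * x) +
          a * (p * (1 - (a * p - l • (1 : A)) * x))) ∧
      ((a * p - l • (1 : A) - (a * p - l • (1 : A)) ^ 2 * x + l • (1 : A)) * M = 1 →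
        IsUnit (1 - p * (1 - (a * p - l • (1 : A)) * x) +
          a * (p * (1 - (a * p - l • (1 : A)) * x)))) := by
    intro M m1 m2 m3 m4
    clear hU hU' hunit hun hQ x3 hacc c2 t1 t2 t3 tcomm ta tp tx sr hLM bic
    generalize l • (1 : A) = L at *
    obtain ⟨R, _, f, hf, a, p, x, L, M, rfl, rfl, rfl, rfl, rfl⟩ := lift5 a p x L M hap hxa.symm
      (c1 _).symm m1.symm hxp.symm (c1 _).symm m2.symm (c1 _).symm m3.symm m4
    simp only [← map_mul, ← map_sub, ← map_pow, ← map_add, ← map_one f, hf.eq_iff] at x2 hpp ⊢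
    refine ⟨?_, ?_, ?_, ?_, ?_, ?_, ?_, ?_, ?_, ?_, ?_, ?_⟩
    · grind
    · grind
    · grind
    · grind
    · grind
    · grind
    · grind
    · grind
    · grind
    · grind
    · grind
    · intro h
      apply IsUnit.map
      apply IsUnit.of_mul_eq_one (1 - p * (1 - (a * p - L) * x) + M * (p * (1 - (a * p - L) * x)))
      have i1 : (p * (1 - (a * p - L) * x)) ^ 2 = p * (1 - (a * p - L) * x) := by grind
      have i2 : a * (p * (1 - (a * p - L) * x)) = 
        (a * p - L - (a * p - L) ^ 2 * x + L) * (p * (1 - (a * p - L) * x)) := by grind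
      rw [i2]
      generalize (p * (1 - (a * p - L) * x)) = e at *
      generalize (a * p - L - (a * p - L) ^ 2 * x + L) = n at *
      grind
  obtain ⟨k1, k2, k3, k4, k5, k6, k7, k8, k9, k10, k11, k12⟩ := key t ta tp tx (c1 t)
  have k13 := k12 t1
  refine ⟨p * ((a * p - l • (1 : A)) * x), ⟨k1, k2, ?_, ?_, ?_⟩, ?_, ?_⟩
  · rw [← mul_assoc]
    exact acc_mul hacc k3 k4
  · rw [k11]
    exact hun.mul k13
  · intro u c hu hau hus hac
    obtain ⟨q1, q2⟩ := hQ u c hu hau hus hac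
    obtain ⟨w, w1, w2, w3⟩ := unit_inv (hunit u hus)
    rw [k8]
    generalize p * (1 - (a * p - l • (1 : A)) * x) = e at *
    generalize (a * p - l • (1 : A) - (a * p - l • (1 : A)) ^ 2 * x) = n at *
    generalize l • (1 : A) = L at *
    have f1 : (a * u - L) * u = u * (a - L) := by
      rw [sub_mul, mul_sub, mul_assoc, hu, hau, c1]
    have f2 : u * (a * u - L) = (a - L) * u := by
      rw [sub_mul, mul_sub, hau, ← mul_assoc, hu, c1]
    have f3 : (a - L) * c = c * (a - L) := by rw [sub_mul, mul_sub, hac, c1]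
    have z1 : u * c * e = 0 := by
      refine sand (B := w) (C := n) ?_ ?_
      · calc u * c * e = (w * (a * u - L)) * (u * c * e) := by rw [w2, one_mul]
          _ = w * ((a * u - L) * u) * c * e := by simp only [mul_assoc]
          _ = w * u * ((a - L) * c) * e := by rw [f1]; simp only [mul_assoc]
          _ = w * u * c * ((a - L) * e) := by rw [f3]; simp only [mul_assoc]
          _ = _ := by rw [← k9]; simp only [mul_assoc]
      · obtain ⟨k, hk⟩ := small0 (C := w) sr
        exact ⟨k, by rwa [mul_comm]⟩
    have z2 : e * c * u = 0 := by
      refine sand (B := n) (C := w) ?_ (small0 sr)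
      calc e * c * u = (e * c * u) * ((a * u - L) * w) := by rw [w1, mul_one]
          _ = e * c * (u * (a * u - L)) * w := by simp only [mul_assoc]
          _ = e * (c * (a - L)) * u * w := by rw [f2]; simp only [mul_assoc]
          _ = (e * (a - L)) * c * u * w := by rw [← f3]; simp only [mul_assoc]
          _ = _ := by rw [← k10]; simp only [mul_assoc]
    exact ⟨by rw [mul_add, q1, z1, add_zero], by rw [add_mul, add_mul, q2, z2, add_zero]⟩
  · rw [← mul_assoc]
    exact unit_alg _ _ x _ _ k3 k5 k6 hLM k4 k7 c2 c1
  · intro m hm hu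
    rw [← mul_assoc]
    exact unit_mul_idem _ _ _ hm k3 k4 hu

theorem steps [CompleteSpace A] [Nontrivial A] {r : ℝ≥0} (hr0 : 0 < r) {a p : A} (hG : Good r a p)
    (F : Finset ℂ) (hF : ∀ l ∈ F, r ≤ ‖l‖₊) :
    ∃ p' : A, Good r a p' ∧ (∀ l ∈ F, IsUnit (a * p' - l • (1 : A))) ∧
      ∀ m : ℂ, m ≠ 0 → IsUnit (a * p - m • (1 : A)) → IsUnit (a * p' - m • (1 : A)) := by
  have nz : ∀ l : ℂ, r ≤ ‖l‖₊ → l ≠ 0 := by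
    rintro l h rfl
    simp at h
    exact hr0.ne' h
  induction F using Finset.induction_on with
  | empty => exact ⟨p, hG, by simp, fun _ _ h => h⟩
  | insert l F hlF ih =>
    obtain ⟨p1, g1, g2, g3⟩ := ih fun m hm => hF m (Finset.mem_insert_of_mem hm)
    have hrl := hF l (Finset.mem_insert_self _ _)
    obtain ⟨p2, j1, j2, j3⟩ := step g1 l (nz l hrl) hrl
    refine ⟨p2, j1, ?_, fun m hm h => j3 m hm (g3 m hm h)⟩
    intro m hm
    rcases Finset.mem_insert.1 hm with rfl | hm'
    · exact j2
    · exact j3 m (nz m (hF m hm)) (g2 m hm')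

theorem acc_finite [CompleteSpace A] [Nontrivial A] {b : A} (hb : MemAcc b) {r : ℝ≥0}
    (hr0 : 0 < r) : {l : ℂ | l ∈ spectrum ℂ b ∧ r ≤ ‖l‖₊}.Finite := by
  have hK : IsCompact {l : ℂ | l ∈ spectrum ℂ b ∧ r ≤ ‖l‖₊} :=
    (spectrum.isCompact b).inter_right (t := {l : ℂ | r ≤ ‖l‖₊})
      (isClosed_le continuous_const continuous_nnnorm)
  have := hK.induction_on (p := fun s => (s ∩ spectrum ℂ b).Finite) (by simp)
    (fun s t hst ht => ht.subset (Set.inter_subset_inter_left _ hst))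
    (fun s t hs ht => by rw [Set.union_inter_distrib_right]; exact hs.union ht) ?_
  · exact this.subset fun l hl => ⟨hl, hl.1⟩
  · rintro l ⟨-, hl⟩
    have hl0 : l ≠ 0 := by
      rintro rfl
      simp at hl
      exact hr0.ne' hl
    have h1 := gd_isolated (hb l hl0)
    rw [eventually_nhdsWithin_iff] at h1
    have ht : Tendsto (fun m : ℂ => m - l) (𝓝 l) (𝓝 0) := by
      have : Continuous fun m : ℂ => m - l := by fun_prop
      simpa using this.tendsto l
    have h2 := ht.eventually h1
    refine ⟨_, mem_nhdsWithin_of_mem_nhds h2, ?_⟩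
    refine (Set.finite_singleton l).subset ?_
    rintro m ⟨hm1, hm2⟩
    by_contra hne
    have := hm1 (show m - l ≠ 0 from sub_ne_zero.2 hne)
    rw [sub_smul, sub_sub_sub_cancel_right] at this
    exact (mem_sp b m).1 hm2 this

theorem start [CompleteSpace A] [Nontrivial A] {a x : A} (h : IsAgDrazinInverseOf x a) :
    Good (‖x‖₊ + 1)⁻¹ a (1 - a * x) := by
  obtain ⟨h1, h2, h3⟩ := h
  have key : (1 - a * x) * (1 - a * x) = 1 - a * x ∧ a * (1 - a * x) = (1 - a * x) * a ∧
      a - a ^ 2 * x = a * (1 - a * x) ∧ IsUnit (a * (1 - (1 - a * x)) + (1 - a * x)) ∧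
      a * (a * x * x) = a * x ∧ x * (a * x) * a = a * x := by
    clear h3
    obtain ⟨R, _, f, hf, a, x, -, -, -, rfl, rfl, -, -, -⟩ := lift5 a x 0 0 0 h1
      (by simp) (by simp) (by simp) (by simp) (by simp) (by simp) (by simp) (by simp) (by simp)
    simp only [← map_mul, ← map_sub, ← map_pow, ← map_add, ← map_one f, hf.eq_iff] at h2 ⊢
    refine ⟨?_, ?_, ?_, ?_, ?_, ?_⟩
    · grind
    · grind
    · grind
    · apply IsUnit.map
      apply IsUnit.of_mul_eq_one (x + (1 - a * x))
      grind
    · grind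
    · grind
  obtain ⟨k1, k2, k3, k4, k5, k6⟩ := key
  refine ⟨k1, k2, k3 ▸ h3, k4, ?_⟩
  intro u c hu hau hus hac
  rw [sub_sub_cancel]
  have hsm : ∃ n : ℕ, ‖(a * u) ^ n‖ * ‖x ^ n‖ < 1 := by
    refine small hus ?_
    rw [inv_mul_lt_iff₀ (by positivity)]; simp
  constructor
  · refine sand (B := a * u) (C := x) ?_ hsm
    calc u * c * (a * x) = u * c * (a * (a * x * x)) := by rw [k5]
      _ = u * (c * a) * (a * x * x) := by simp only [mul_assoc]
      _ = (u * a) * c * (a * x * x) := by rw [← hac]; simp only [mul_assoc]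
      _ = (a * (u * u)) * c * (a * x * x) := by rw [← hau, hu]
      _ = _ := by simp only [mul_assoc]
  · refine sand (B := x) (C := a * u) ?_ ?_
    · calc a * x * c * u = (x * (a * x) * a) * c * u := by rw [k6]
        _ = x * (a * x) * (a * c) * u := by simp only [mul_assoc]
        _ = x * (a * x) * c * (a * (u * u)) := by rw [hac, hu]; simp only [mul_assoc]
        _ = x * (a * x) * c * (u * (a * u)) := by
          rw [← mul_assoc a, ← mul_assoc u a u, ← hau]
        _ = _ := by simp only [mul_assoc]
    · obtain ⟨n, hn⟩ := hsm
      exact ⟨n, by rwa [mul_comm]⟩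

theorem nontriv {b : A} (h : MemAcc b) : Nontrivial A := by
  by_contra hc
  rw [not_nontrivial_iff_subsingleton] at hc
  obtain ⟨x, -, -, hx⟩ := h 1 one_ne_zero
  have : (0 : ℂ) ∈ spectrum ℂ (b - (1 : ℂ) • (1 : A) - (b - (1 : ℂ) • (1 : A)) ^ 2 * x) := by
    rw [hx]; rfl
  rw [mem_sp] at this
  exact this (isUnit_of_subsingleton _)

theorem fwd [CompleteSpace A] {a x : A} (h : IsAgDrazinInverseOf x a) :
    ∃ p : A, p * p = p ∧ (∀ y : A, a * y = y * a → p * y = y * p) ∧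
        IsUnit (a + p) ∧ MemAcc (a * p) := by
  have := nontriv h.2.2
  have hG := start h
  set r : ℝ≥0 := (‖x‖₊ + 1)⁻¹ with hr
  have hr0 : 0 < r := by positivity
  have hr1 : r ≤ 1 := by rw [hr]; exact inv_le_one_of_one_le₀ (by simp)
  have hfin := acc_finite hG.2.2.1 hr0
  obtain ⟨p, ⟨g1, g2, g3, g4, g5⟩, hp1, hp2⟩ := steps hr0 hG hfin.toFinset (by
    intro l hl; exact (hfin.mem_toFinset.1 hl).2)
  have hsr : spectralRadius ℂ (a * p) < r := by
    apply spectrum.spectralRadius_lt_of_forall_lt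
    intro k hk
    by_contra hc
    rw [not_lt] at hc
    rw [mem_sp] at hk
    apply hk
    by_cases hks : k ∈ spectrum ℂ (a * (1 - a * x))
    · exact hp1 k (hfin.mem_toFinset.2 ⟨hks, hc⟩)
    · refine hp2 k ?_ (by rw [mem_sp, not_not] at hks; exact hks)
      rintro rfl
      simp at hc
      exact hr0.ne' hc
  refine ⟨p, g1, ?_, ?_, g3⟩
  · intro y hy
    obtain ⟨z1, z2⟩ := g5 p y g1 g2 hsr hy
    exact comm_of_corner z1 z2
  · have h1 : IsUnit (1 + a * p) := by
      have : (-1 : ℂ) ∈ resolventSet ℂ (a * p) :=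
        spectrum.mem_resolventSet_of_spectralRadius_lt (hsr.trans_le (by simpa using hr1))
      have h2 : ¬ (-1 : ℂ) ∈ spectrum ℂ (a * p) := fun h => h this
      rw [mem_sp, not_not] at h2
      simpa [add_comm] using h2
    have : a + p = (a * (1 - p) + p) * (1 + a * p) := by
      have e1 : (1 - p) * (a * p) = 0 := by
        rw [g2, ← mul_assoc, sub_mul, one_mul, g1]; simp
      have e2 : p * (a * p) = a * p := by rw [g2, ← mul_assoc, g1]
      rw [mul_add, mul_one, add_mul, e2, mul_assoc, e1, mul_sub]
      simp only [mul_one, mul_zero]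
      abel
    rw [this]
    exact g4.mul h1

theorem bwd {a p : A} (h1 : p * p = p) (h2 : ∀ y : A, a * y = y * a → p * y = y * p)
    (h3 : IsUnit (a + p)) (h4 : MemAcc (a * p)) : IsAgDrazinInv a := by
  have hpa := h2 a rfl
  obtain ⟨g, g1, g2, g3⟩ := unit_inv h3
  have ga : g * a = a * g := g3 a (by rw [add_mul, mul_add, hpa])
  have gp : g * p = p * g := g3 p (by rw [add_mul, mul_add, hpa])
  have key : a * (g * (1 - p)) = g * (1 - p) * a ∧
      g * (1 - p) * a * (g * (1 - p)) = g * (1 - p) ∧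
      a - a ^ 2 * (g * (1 - p)) = a * p := by
    clear h4 h3 h2
    obtain ⟨R, _, f, hf, a, p, g, -, -, rfl, rfl, rfl, -, -⟩ := lift5 a p g 0 0 hpa.symm ga.symm
      (by simp) (by simp) gp.symm (by simp) (by simp) (by simp) (by simp) (by simp)
    simp only [← map_mul, ← map_sub, ← map_pow, ← map_add, ← map_one f, hf.eq_iff] at h1 g1 ⊢
    refine ⟨?_, ?_, ?_⟩ <;> grind
  obtain ⟨k1, k2, k3⟩ := key
  exact ⟨g * (1 - p), k1, k2, k3 ▸ h4⟩

end
end AgD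

theorem agDrazin_iff_exists_idem_bicommutant_unit {A : Type*} [NormedRing A]
    [NormedAlgebra ℂ A] [CompleteSpace A] (a : A) :
    IsAgDrazinInv a ↔
      ∃ p : A, p * p = p ∧ (∀ y : A, a * y = y * a → p * y = y * p) ∧
        IsUnit (a + p) ∧ MemAcc (a * p) := by
  constructor
  · rintro ⟨x, hx⟩
    exact AgD.fwd hx
  · rintro ⟨p, h1, h2, h3, h4⟩
    exact AgD.bwd h1 h2 h3 h4
end

section
/- Let A be a complex unital Banach algebra, a ∈ A, and let p ∈ A be an idempotent with ap = pa such that a + p is invertible in A and ap ∈ A^acc. Then b = (a + p)⁻¹(1 − p) is an ag-Drazin inverse of a, i.e., ab = ba, bab = b, and a − a²b ∈ A^acc. -/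
open Filter Topology

theorem agDrazinInverse_of_idem_unit {A : Type*} [NormedRing A] [NormedAlgebra ℂ A]
    [CompleteSpace A] (a p : A) (hp : p * p = p) (hcomm : a * p = p * a)
    (hu : IsUnit (a + p)) (hacc : MemAcc (a * p)) :
    IsAgDrazinInverseOf (Ring.inverse (a + p) * (1 - p)) a := by
  have h1 : (a + p) * (1 - p) = a * (1 - p) := by
    rw [add_mul, mul_sub p, hp, mul_one, sub_self, add_zero]
  have hca : Commute (a + p) a := by
    change (a + p) * a = a * (a + p)
    rw [add_mul, mul_add, hcomm]
  have hcp : Commute (a + p) p := by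
    change (a + p) * p = p * (a + p)
    rw [add_mul, mul_add, hcomm]
  obtain ⟨u, hu⟩ := hu
  rw [← hu] at h1 hca hcp ⊢
  rw [Ring.inverse_unit]
  have hva : (↑u⁻¹ : A) * a = a * ↑u⁻¹ := hca.units_inv_left
  have hvp : (↑u⁻¹ : A) * p = p * ↑u⁻¹ := hcp.units_inv_left
  have hvq : (↑u⁻¹ : A) * (1 - p) = (1 - p) * ↑u⁻¹ := by
    rw [mul_sub, sub_mul, hvp, mul_one, one_mul]
  have haq : a * (1 - p) = (1 - p) * a := by
    rw [mul_sub, sub_mul, hcomm, mul_one, one_mul]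
  have hqq : (1 - p) * (1 - p) = 1 - p := by
    simp [mul_sub, sub_mul, hp]
  have hba : (↑u⁻¹ : A) * (1 - p) * a = 1 - p := by
    rw [mul_assoc, ← haq, ← h1, ← mul_assoc, Units.inv_mul, one_mul]
  have hab : a * ((↑u⁻¹ : A) * (1 - p)) = 1 - p := by
    rw [← mul_assoc, ← hva, mul_assoc, haq, ← mul_assoc, hba]
  refine ⟨hab.trans hba.symm, ?_, ?_⟩
  · rw [hba, hvq, ← mul_assoc, hqq]
  · have : a - a ^ 2 * ((↑u⁻¹ : A) * (1 - p)) = a * p := by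
      rw [pow_two, mul_assoc, hab, mul_sub, mul_one, sub_sub_cancel]
    rw [this]
    exact hacc
end

section
/- Let A be a complex unital Banach algebra and a ∈ A. Then a is ag-Drazin invertible if and only if there exists an idempotent p ∈ A with ap = pa such that a + p is invertible in A and ap ∈ A^acc. -/
open Filter Topology

theorem qn_tendsto_s8 {A : Type*} [NormedRing A] [NormedAlgebra ℂ A] [CompleteSpace A] {m : A}
    (hm : IsQuasinilpotent m) (K : ℝ) (hK : 0 < K) :
    Tendsto (fun n : ℕ => K ^ n * ‖m ^ n‖) atTop (𝓝 0) := by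
  have h := spectrum.pow_norm_pow_one_div_tendsto_nhds_spectralRadius m
  have hr : spectralRadius ℂ m = 0 := by
    unfold spectralRadius
    rw [hm]; simp
  rw [hr] at h
  have hd : (0 : ENNReal) < ENNReal.ofReal (1 / (2 * K)) := by
    rw [ENNReal.ofReal_pos]; positivity
  have h2 := (h.eventually (gt_mem_nhds hd)).and (eventually_ge_atTop 1)
  refine squeeze_zero' (g := fun n : ℕ => (1 / 2 : ℝ) ^ n) (Eventually.of_forall fun n => by positivity) ?_
    (tendsto_pow_atTop_nhds_zero_of_lt_one (by norm_num) (by norm_num))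
  filter_upwards [h2] with n hn
  obtain ⟨hn, h1⟩ := hn
  rw [ENNReal.ofReal_lt_ofReal_iff (by positivity)] at hn
  have h3 : (‖m ^ n‖ ^ (1 / n : ℝ)) ^ n ≤ (1 / (2 * K)) ^ n :=
    pow_le_pow_left₀ (by positivity) hn.le n
  rw [one_div, Real.rpow_inv_natCast_pow (norm_nonneg _) (by omega)] at h3
  calc K ^ n * ‖m ^ n‖ ≤ K ^ n * (1 / (2 * K)) ^ n := by gcongr
    _ = (1 / 2 : ℝ) ^ n := by
      rw [← mul_pow]; congr 1; field_simp

/-- Sylvester type vanishing. -/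
theorem syl_left {A : Type*} [NormedRing A] [NormedAlgebra ℂ A] [CompleteSpace A] {m z w : A}
    (hm : IsQuasinilpotent m) (h : w = z * w * m) : w = 0 := by
  have h1 : ∀ n : ℕ, w = z ^ n * w * m ^ n := by
    intro n
    induction n with
    | zero => simp
    | succ k ih =>
      calc w = z ^ k * w * m ^ k := ih
        _ = z ^ k * (z * w * m) * m ^ k := by rw [← h]
        _ = _ := by rw [pow_succ z, pow_succ' m]; simp only [mul_assoc]
  have h2 : Tendsto (fun n : ℕ => ‖w‖ * ((‖z‖ + 1) ^ n * ‖m ^ n‖)) atTop (𝓝 0) := by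
    simpa using (qn_tendsto_s8 hm (‖z‖ + 1) (by positivity)).const_mul ‖w‖
  have h3 : ‖w‖ ≤ 0 := by
    refine ge_of_tendsto h2 ?_
    filter_upwards [eventually_ge_atTop 1] with n hn
    calc ‖w‖ = ‖z ^ n * w * m ^ n‖ := by rw [← h1 n]
      _ ≤ ‖z ^ n‖ * ‖w‖ * ‖m ^ n‖ := (norm_mul_le _ _).trans (by gcongr; exact norm_mul_le _ _)
      _ ≤ (‖z‖ + 1) ^ n * ‖w‖ * ‖m ^ n‖ := by
        gcongr
        exact (norm_pow_le' z hn).trans (by gcongr; linarith)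
      _ = _ := by ring
  simpa using h3

theorem syl_right {A : Type*} [NormedRing A] [NormedAlgebra ℂ A] [CompleteSpace A] {m z w : A}
    (hm : IsQuasinilpotent m) (h : w = m * w * z) : w = 0 := by
  have h1 : ∀ n : ℕ, w = m ^ n * w * z ^ n := by
    intro n
    induction n with
    | zero => simp
    | succ k ih =>
      calc w = m ^ k * w * z ^ k := ih
        _ = m ^ k * (m * w * z) * z ^ k := by rw [← h]
        _ = _ := by rw [pow_succ m, pow_succ' z]; simp only [mul_assoc]
  have h2 : Tendsto (fun n : ℕ => ‖w‖ * ((‖z‖ + 1) ^ n * ‖m ^ n‖)) atTop (𝓝 0) := by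
    simpa using (qn_tendsto_s8 hm (‖z‖ + 1) (by positivity)).const_mul ‖w‖
  have h3 : ‖w‖ ≤ 0 := by
    refine ge_of_tendsto h2 ?_
    filter_upwards [eventually_ge_atTop 1] with n hn
    calc ‖w‖ = ‖m ^ n * w * z ^ n‖ := by rw [← h1 n]
      _ ≤ ‖m ^ n‖ * ‖w‖ * ‖z ^ n‖ := (norm_mul_le _ _).trans (by gcongr; exact norm_mul_le _ _)
      _ ≤ ‖m ^ n‖ * ‖w‖ * (‖z‖ + 1) ^ n := by
        gcongr
        exact (norm_pow_le' z hn).trans (by gcongr; linarith)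
      _ = _ := by ring
  simpa using h3

theorem dcomm {A : Type*} [NormedRing A] [NormedAlgebra ℂ A] [CompleteSpace A] {c z u : A}
    (h1 : c * z = z * c) (h2 : z * c * z = z) (hm : IsQuasinilpotent (c - c ^ 2 * z))
    (hu : u * c = c * u) : u * z = z * u := by
  -- idempotent e = c z
  have hee : (c * z) * (c * z) = c * z := by
    calc (c * z) * (c * z) = c * (z * c * z) := by simp only [mul_assoc]
      _ = _ := by rw [h2]
  have hm1 : c - c ^ 2 * z = c * (1 - c * z) := by
    rw [pow_two, mul_sub, mul_one, mul_assoc]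
  have hm2 : c - c ^ 2 * z = (1 - c * z) * c := by
    rw [sub_mul, one_mul, pow_two, mul_assoc c z c, ← h1, mul_assoc]
  have hze : z * (c * z) = z := by rw [← mul_assoc, h2]
  have hez : (c * z) * z = z := by rw [h1, h2]
  have hff : (1 - c * z) * (1 - c * z) = 1 - c * z := by
    rw [sub_mul, one_mul, mul_sub, mul_one, hee, sub_self, sub_zero]
  have hec : c * z * c = c * (c * z) := by rw [mul_assoc, ← h1]
  have hfc : (1 - c * z) * c = c * (1 - c * z) := by rw [← hm1, ← hm2]
  have w1 : (c * z) * u * (1 - c * z) = 0 := by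
    apply syl_left (z := z) hm
    rw [hm1]
    symm
    calc z * (c * z * u * (1 - c * z)) * (c * (1 - c * z))
        = (z * (c * z)) * u * ((1 - c * z) * c) * (1 - c * z) := by simp only [mul_assoc]
      _ = z * (u * c) * ((1 - c * z) * (1 - c * z)) := by rw [hfc, hze]; simp only [mul_assoc]
      _ = (z * c) * u * (1 - c * z) := by rw [hff, hu]; simp only [mul_assoc]
      _ = _ := by rw [h1]
  have w2 : (1 - c * z) * u * (c * z) = 0 := by
    apply syl_right (z := z) hm
    rw [hm2]
    symm
    calc (1 - c * z) * c * ((1 - c * z) * u * (c * z)) * z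
        = (1 - c * z) * (c * (1 - c * z)) * u * ((c * z) * z) := by simp only [mul_assoc]
      _ = ((1 - c * z) * (1 - c * z)) * (c * u) * z := by rw [← hfc, hez]; simp only [mul_assoc]
      _ = _ := by rw [hff, ← hu]; simp only [mul_assoc]
  have hcomm : c * z * u = u * (c * z) := by
    have e1 : c * z * u = c * z * u * (c * z) := by
      rw [mul_sub, mul_one, sub_eq_zero] at w1; exact w1
    have e2 : u * (c * z) = c * z * u * (c * z) := by
      rw [sub_mul, sub_mul, one_mul, sub_eq_zero] at w2; exact w2
    rw [e1, ← e2]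
  calc u * z = u * ((c * z) * z) := by rw [hez]
    _ = (u * (c * z)) * z := by simp only [mul_assoc]
    _ = (z * c) * u * z := by rw [← hcomm, h1]
    _ = z * (c * u) * z := by simp only [mul_assoc]
    _ = z * (u * (c * z)) := by rw [← hu]; simp only [mul_assoc]
    _ = z * (c * z) * u := by rw [← hcomm]; simp only [mul_assoc]
    _ = z * u := by rw [hze]

theorem qn_mul_idem {A : Type*} [NormedRing A] [NormedAlgebra ℂ A] [CompleteSpace A] {n e : A}
    (hn : IsQuasinilpotent n) (he : e * e = e) (hc : n * e = e * n) :
    IsQuasinilpotent (n * e) := by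
  unfold IsQuasinilpotent at *
  have : Nontrivial A := by
    by_contra h
    rw [not_nontrivial_iff_subsingleton] at h
    have : spectrum ℂ n = ∅ := spectrum.of_subsingleton n
    rw [this] at hn
    exact (Set.singleton_ne_empty _ hn.symm)
  refine ((spectrum.nonempty (n * e)).subset_singleton_iff).1 ?_
  intro l hl
  by_contra hl0
  have hl0 : l ≠ 0 := hl0
  apply hl
  have hnl : l ∉ spectrum ℂ n := by rw [hn]; exact hl0
  rw [spectrum.mem_iff, not_not] at hnl
  obtain ⟨u, hu⟩ := hnl
  have hcu : Commute (u : A) e := by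
    rw [hu]
    exact (Algebra.commute_algebraMap_left l e).sub_left hc
  have hcv : Commute (↑u⁻¹ : A) e := hcu.units_inv_left
  have hne : n = algebraMap ℂ A l - u := by rw [hu]; abel
  have hmain : algebraMap ℂ A l - n * e = u * e + algebraMap ℂ A l * (1 - e) := by
    rw [hne, sub_mul, mul_sub, mul_one]; abel
  rw [spectrum.mem_resolventSet_iff, hmain]
  have hz : e * (1 - e) = 0 := by rw [mul_sub, he, mul_one, sub_self]
  have hz' : (1 - e) * e = 0 := by rw [sub_mul, he, one_mul, sub_self]
  have hff : (1 - e) * (1 - e) = 1 - e := by rw [mul_sub, hz', mul_one, sub_zero]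
  have hll : algebraMap ℂ A l * algebraMap ℂ A l⁻¹ = 1 := by
    rw [← map_mul, mul_inv_cancel₀ hl0, map_one]
  have key : ∀ s t : A, ∀ k k' : ℂ, Commute t e → s * t = 1 → k * k' = 1 →
      (s * e + algebraMap ℂ A k * (1 - e)) * (t * e + algebraMap ℂ A k' * (1 - e)) = 1 := by
    intro s t k k' ht hst hk
    have ht' : e * t = t * e := ht.symm.eq
    have ht2 : (1 - e) * t = t * (1 - e) := by rw [sub_mul, mul_sub, ht']; simp
    have hk2 : algebraMap ℂ A k * algebraMap ℂ A k' = 1 := by rw [← map_mul, hk, map_one]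
    have c1 : (s * e) * (t * e) = e := by
      rw [mul_assoc, ← mul_assoc e, ht', mul_assoc t, he, ← mul_assoc, hst, one_mul]
    have c2 : (s * e) * (algebraMap ℂ A k' * (1 - e)) = 0 := by
      rw [mul_assoc, ← mul_assoc e, ← Algebra.commutes k' e, mul_assoc, hz]; simp
    have c3 : (algebraMap ℂ A k * (1 - e)) * (t * e) = 0 := by
      rw [mul_assoc, ← mul_assoc (1 - e), ht2, mul_assoc t, hz']; simp
    have c4 : (algebraMap ℂ A k * (1 - e)) * (algebraMap ℂ A k' * (1 - e)) = 1 - e := by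
      rw [mul_assoc, ← mul_assoc (1 - e), ← Algebra.commutes k' (1 - e), mul_assoc, hff,
        ← mul_assoc, hk2, one_mul]
    rw [add_mul, mul_add, mul_add, c1, c2, c3, c4]; abel
  exact ⟨⟨_, ↑u⁻¹ * e + algebraMap ℂ A l⁻¹ * (1 - e),
    key _ _ _ _ hcv (by simp) (mul_inv_cancel₀ hl0),
    key _ _ _ _ hcu (by simp) (inv_mul_cancel₀ hl0)⟩, rfl⟩

theorem exists_commRing {A : Type*} [Ring A] [Algebra ℂ A] (s : Set A)
    (h : ∀ a ∈ s, ∀ b ∈ s, a * b = b * a) :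
    ∃ (S : Subalgebra ℂ A), s ⊆ S ∧ ∀ a b : S, a * b = b * a :=
  ⟨Algebra.adjoin ℂ s, Algebra.subset_adjoin,
    (Algebra.adjoinCommRingOfComm ℂ h).mul_comm⟩

theorem cr_compress {R : Type*} [CommRing R] (c z e k k' : R) (he : e * e = e) (hk : k * k' = 1)
    (hz : z * c * z = z) :
    (z * e - k' * (1 - e)) * (c * e - k * (1 - e)) * (z * e - k' * (1 - e)) =
      z * e - k' * (1 - e) ∧
    (c * e - k * (1 - e)) - (c * e - k * (1 - e)) ^ 2 * (z * e - k' * (1 - e)) =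
      (c - c ^ 2 * z) * e := by
  have h0 : e * (1 - e) = 0 := by linear_combination -he
  have hf : (1 - e) * (1 - e) = 1 - e := by linear_combination he
  have h1 : (c * e - k * (1 - e)) * (z * e - k' * (1 - e)) = c * z * e + (1 - e) := by
    linear_combination (c * z) * he - (c * k' + k * z) * h0 + (k * k') * hf + (1 - e) * hk
  constructor
  · calc _ = (c * e - k * (1 - e)) * (z * e - k' * (1 - e)) * (z * e - k' * (1 - e)) := by ring
      _ = (c * z * e + (1 - e)) * (z * e - k' * (1 - e)) := by rw [h1]
      _ = _ := by
        linear_combination (c * z * z) * he + (z - c * z * k') * h0 - k' * hf + e * hz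
  · calc _ = (c * e - k * (1 - e)) * (1 - (c * e - k * (1 - e)) * (z * e - k' * (1 - e))) := by ring
      _ = (c * e - k * (1 - e)) * (1 - (c * z * e + (1 - e))) := by rw [h1]
      _ = _ := by
        linear_combination (c * (1 - c * z)) * he - k * (1 - c * z) * h0

theorem cr_unit {R : Type*} [CommRing R] (a x q b y r v : R) (hx : x * a * x = x)
    (hq : q = 1 - a * x) (hb : b = a - a ^ 2 * x + 1) (hy : y * b * y = y) (hr : r = 1 - b * y)
    (hv : (1 - (b - b ^ 2 * y)) * v = 1) :
    (a + q * (b * y)) * (x + q * y - q * r * v) = 1 := by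
  have hqq : q * q = q := by rw [hq]; linear_combination a * hx
  have hqx : q * x = 0 := by rw [hq]; linear_combination -hx
  have haq : a * q = b - 1 := by rw [hq, hb]; ring
  have hrr : r * r = r := by rw [hr]; linear_combination b * hy
  have hry : r * y = 0 := by rw [hr]; linear_combination -hy
  have hax : a * x = 1 - q := by rw [hq]; ring
  have hby : b * y = 1 - r := by rw [hr]; ring
  have hbq : b * q = b - 1 + q := by linear_combination (-q + 1) * haq + a * hqq
  have hv' : (1 - b * r) * v = 1 := by rw [hr]; linear_combination hv
  have t1 : (a + q * (b * y)) * x = 1 - q := by linear_combination hax + (b * y) * hqx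
  have t2 : (a + q * (b * y)) * (q * y) = q * (1 - r) := by
    have : b * y * y = y := by linear_combination hy
    linear_combination y * haq + (b * y * y) * hqq + q * this + q * hby - y * hbq
  have t3 : (a + q * (b * y)) * (q * r) = (b - 1) * r * q := by
    linear_combination r * haq + (b * q * q) * hry - r * hbq
  have t4 : (b - 1) * r * q * v = - (r * q) := by
    linear_combination (- r * q) * hv' - b * q * v * hrr
  linear_combination t1 + t2 - v * t3 - t4

theorem compress {A : Type*} [NormedRing A] [NormedAlgebra ℂ A] [CompleteSpace A] {c e : A} {l : ℂ}
    (hl : l ≠ 0) (he : e * e = e) (hce : c * e = e * c) (h : IsGDrazinInv c) :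
    IsGDrazinInv (c * e - l • (1 - e)) := by
  obtain ⟨z, h1, h2, h3⟩ := h
  have hez : e * z = z * e := dcomm h1 h2 h3 hce.symm
  obtain ⟨S, hS, hcomm⟩ := exists_commRing ({c, z, e} : Set A) (by
    rintro a (rfl | rfl | rfl) b (rfl | rfl | rfl) <;> simp [*])
  letI : CommRing S := { (inferInstance : Ring S) with mul_comm := hcomm }
  have := cr_compress (R := S) ⟨c, hS (by simp)⟩ ⟨z, hS (by simp)⟩ ⟨e, hS (by simp)⟩
    (algebraMap ℂ S l) (algebraMap ℂ S l⁻¹) (Subtype.ext he)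
    (by rw [← map_mul, mul_inv_cancel₀ hl, map_one]) (Subtype.ext h2)
  obtain ⟨e1, e2⟩ := this
  have e1 := congrArg Subtype.val e1
  have e2 := congrArg Subtype.val e2
  have e3 := congrArg Subtype.val (hcomm
    (⟨c, hS (by simp)⟩ * ⟨e, hS (by simp)⟩ - algebraMap ℂ S l * (1 - ⟨e, hS (by simp)⟩))
    (⟨z, hS (by simp)⟩ * ⟨e, hS (by simp)⟩ - algebraMap ℂ S l⁻¹ * (1 - ⟨e, hS (by simp)⟩)))
  change (z * e - algebraMap ℂ A l⁻¹ * (1 - e)) * (c * e - algebraMap ℂ A l * (1 - e)) *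
    (z * e - algebraMap ℂ A l⁻¹ * (1 - e)) = z * e - algebraMap ℂ A l⁻¹ * (1 - e) at e1
  change (c * e - algebraMap ℂ A l * (1 - e)) - (c * e - algebraMap ℂ A l * (1 - e)) ^ 2 *
    (z * e - algebraMap ℂ A l⁻¹ * (1 - e)) = (c - c ^ 2 * z) * e at e2
  change (c * e - algebraMap ℂ A l * (1 - e)) * (z * e - algebraMap ℂ A l⁻¹ * (1 - e)) =
    (z * e - algebraMap ℂ A l⁻¹ * (1 - e)) * (c * e - algebraMap ℂ A l * (1 - e)) at e3
  rw [Algebra.smul_def]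
  refine ⟨_, e3, e1, ?_⟩
  rw [e2]
  refine qn_mul_idem h3 he ?_
  have k1 : Commute c e := hce
  have k2 : Commute z e := hez.symm
  exact k1.sub_left ((k1.pow_left 2).mul_left k2)

theorem agDrazin_iff_exists_idem_unit_comm {A : Type*} [NormedRing A] [NormedAlgebra ℂ A]
    [CompleteSpace A] (a : A) :
    IsAgDrazinInv a ↔
      ∃ p : A, p * p = p ∧ a * p = p * a ∧ IsUnit (a + p) ∧ MemAcc (a * p) := by

  constructor
  · rintro ⟨x, hax, hx, hacc⟩
    have cax : Commute a x := hax
    have cab : Commute a (a - a ^ 2 * x + 1) :=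
      ((Commute.refl a).sub_right (((Commute.refl a).pow_right 2).mul_right cax)).add_right
        (Commute.one_right a)
    have cxb : Commute x (a - a ^ 2 * x + 1) :=
      (cax.symm.sub_right ((cax.symm.pow_right 2).mul_right (Commute.refl x))).add_right
        (Commute.one_right x)
    have hb := hacc (-1) (by norm_num)
    have hb1 : a - a ^ 2 * x - (-1 : ℂ) • (1 : A) = a - a ^ 2 * x + 1 := by
      rw [neg_smul, one_smul, sub_neg_eq_add]
    rw [hb1] at hb
    obtain ⟨b, hbdef⟩ : ∃ b, b = a - a ^ 2 * x + 1 := ⟨_, rfl⟩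
    rw [← hbdef] at hb cab cxb
    obtain ⟨y, hby, hy, hqn⟩ := hb
    have cay : Commute a y := dcomm hby hy hqn cab
    have cxy : Commute x y := dcomm hby hy hqn cxb
    have cby : Commute b y := hby
    have h1 : (1 : ℂ) ∉ spectrum ℂ (b - b ^ 2 * y) := by
      rw [show spectrum ℂ (b - b ^ 2 * y) = {0} from hqn]; simp
    rw [spectrum.mem_iff, not_not, map_one] at h1
    obtain ⟨u, hu⟩ := h1
    have cu : ∀ t : A, Commute t b → Commute t y → Commute t (↑u⁻¹ : A) := by
      intro t h1 h2
      have : Commute t (u : A) := by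
        rw [hu]
        exact (Commute.one_right t).sub_right (h1.sub_right ((h1.pow_right 2).mul_right h2))
      exact this.units_inv_right
    have cav := cu a cab cay
    have cxv := cu x cxb cxy
    have cyv := cu y cby.symm (Commute.refl y)
    obtain ⟨v, hvdef⟩ : ∃ v : A, v = (↑u⁻¹ : A) := ⟨_, rfl⟩
    rw [← hvdef] at cav cxv cyv
    have huv : (1 - (b - b ^ 2 * y)) * v = 1 := by rw [← hu, hvdef]; simp
    have cbq : Commute b (1 - a * x) :=
      (Commute.one_right b).sub_right (cab.symm.mul_right cxb.symm)
    have cyq : Commute y (1 - a * x) :=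
      (Commute.one_right y).sub_right (cay.symm.mul_right cxy.symm)
    have caq : Commute a (1 - a * x) :=
      (Commute.one_right a).sub_right ((Commute.refl a).mul_right cax)
    have hqq : (1 - a * x) * (1 - a * x) = 1 - a * x := by
      have : a * x * (a * x) = a * x := by
        rw [mul_assoc, ← mul_assoc x, hx]
      rw [sub_mul, one_mul, mul_sub, mul_one, this, sub_self, sub_zero]
    have hee : b * y * (b * y) = b * y := by
      rw [mul_assoc, ← mul_assoc y, hy]
    have cqe : Commute (1 - a * x) (b * y) := (cbq.mul_left cyq).symm
    have cae : Commute a (b * y) := cab.mul_right cay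
    have hunit : (a + (1 - a * x) * (b * y)) *
        (x + (1 - a * x) * y - (1 - a * x) * (1 - b * y) * v) = 1 := by
      obtain ⟨S, hS, hcomm⟩ := exists_commRing ({a, x, y, v} : Set A) (by
        rintro s (rfl | rfl | rfl | rfl) t (rfl | rfl | rfl | rfl) <;>
        first
          | rfl
          | exact cax | exact cay | exact cav | exact cxy | exact cxv | exact cyv
          | exact cax.symm | exact cay.symm | exact cav.symm | exact cxy.symm
          | exact cxv.symm | exact cyv.symm)
      letI : CommRing S := { (inferInstance : Ring S) with mul_comm := hcomm }
      have := cr_unit (R := S) ⟨a, hS (by simp)⟩ ⟨x, hS (by simp)⟩ _ _ ⟨y, hS (by simp)⟩ _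
        ⟨v, hS (by simp)⟩ (Subtype.ext hx) rfl rfl
        (Subtype.ext (by rw [hbdef] at hy; exact hy)) rfl
        (Subtype.ext (by rw [hbdef] at huv; exact huv))
      have := congrArg Subtype.val this
      rw [hbdef]
      exact this
    have cuW : Commute (a + (1 - a * x) * (b * y))
        (x + (1 - a * x) * y - (1 - a * x) * (1 - b * y) * v) := by
      have cbv : Commute b v := by
        rw [hvdef]; exact cu b (Commute.refl b) cby
      have gen : ∀ t : A, Commute t a → Commute t x → Commute t b → Commute t y → Commute t v →
          Commute t (x + (1 - a * x) * y - (1 - a * x) * (1 - b * y) * v) := by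
        intro t h1 h2 h3 h4 h5
        have hq := (Commute.one_right t).sub_right (h1.mul_right h2)
        exact (h2.add_right (hq.mul_right h4)).sub_right
          ((hq.mul_right ((Commute.one_right t).sub_right (h3.mul_right h4))).mul_right h5)
      have ga := gen a (Commute.refl a) cax cab cay cav
      have gx := gen x cax.symm (Commute.refl x) cxb cxy cxv
      have gb := gen b cab.symm cxb.symm (Commute.refl b) cby cbv
      have gy := gen y cay.symm cxy.symm cby.symm (Commute.refl y) cyv
      exact ga.add_left
        (((Commute.one_left _).sub_left (ga.mul_left gx)).mul_left (gb.mul_left gy))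
    refine ⟨(1 - a * x) * (b * y), ?_, caq.mul_right cae,
      ⟨⟨_, _, hunit, cuW.symm.eq.trans hunit⟩, rfl⟩, ?_⟩
    · rw [mul_assoc, ← mul_assoc (b * y), ← cqe.eq, mul_assoc (1 - a * x) (b * y), hee,
        ← mul_assoc, hqq]
    · intro l hl
      have hc := hacc l hl
      have caa : Commute (a - a ^ 2 * x) (b * y) :=
        cae.sub_left ((cae.pow_left 2).mul_left (cxb.mul_right cxy))
      have cce : (a - a ^ 2 * x - l • (1 : A)) * (b * y) =
          (b * y) * (a - a ^ 2 * x - l • (1 : A)) :=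
        caa.sub_left ((Commute.one_left _).smul_left l)
      have := compress hl hee cce hc
      convert this using 1
      rw [sub_mul _ (l • (1 : A)), smul_mul_assoc, one_mul, smul_sub, ← mul_assoc a, mul_sub,
        mul_one, ← mul_assoc a a x, ← pow_two]
      abel
  · rintro ⟨p, hp, hap, ⟨u, hu⟩, hacc⟩
    have cap : Commute a p := hap
    have cau : Commute a (↑u⁻¹ : A) := by
      have : Commute a (u : A) := by rw [hu]; exact (Commute.refl a).add_right cap
      exact this.units_inv_right
    have caf : Commute a (1 - p) := (Commute.one_right a).sub_right cap
    have hpf : p * (1 - p) = 0 := by rw [mul_sub, hp, mul_one, sub_self]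
    have hff : (1 - p) * (1 - p) = 1 - p := by rw [sub_mul, hpf, one_mul, sub_zero]
    have hax : a * (↑u⁻¹ * (1 - p)) = 1 - p := by
      have : a * (1 - p) = u * (1 - p) := by rw [hu, add_mul, hpf, add_zero]
      rw [← mul_assoc, cau.eq, mul_assoc, this, ← mul_assoc]; simp
    have cx : Commute a (↑u⁻¹ * (1 - p)) := cau.mul_right caf
    refine ⟨(↑u⁻¹ : A) * (1 - p), cx.eq, ?_, ?_⟩
    · rw [mul_assoc, hax, mul_assoc, hff]
    · rw [pow_two, mul_assoc, hax, mul_sub, mul_one, sub_sub_cancel]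
      exact hacc
end

section
/- Let A be a complex unital Banach algebra and let a ∈ A be ag-Drazin invertible but not generalized Drazin invertible. Then the ag-Drazin inverse of a is not unique: there exist b, c ∈ A with b ≠ c such that both b and c are ag-Drazin inverses of a. -/
open Filter Topology

set_option linter.unusedSimpArgs false

namespace AgAux

variable {A : Type*} [NormedRing A] [NormedAlgebra ℂ A]

lemma qn_inv {n : A} (h : IsQuasinilpotent n) {l : ℂ} (hl : l ≠ 0) :
    ∃ v : A, v * (n + l • (1:A)) = 1 ∧ (n + l • (1:A)) * v = 1 := by
  have h1 : -l ∉ spectrum ℂ n := by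
    rw [h]; simpa using hl
  rw [spectrum.notMem_iff] at h1
  obtain ⟨u, hu⟩ := h1.neg
  have hu' : (u : A) = n + l • (1:A) := by
    rw [hu, Algebra.algebraMap_eq_smul_one, neg_smul]; abel
  exact ⟨↑u⁻¹, by rw [← hu']; simp, by rw [← hu']; simp⟩

lemma qn_of [CompleteSpace A] [Nontrivial A] {n : A}
    (h : ∀ l : ℂ, l ≠ 0 → ∃ v : A, v * (n + l • (1:A)) = 1 ∧ (n + l • (1:A)) * v = 1) :
    IsQuasinilpotent n := by
  have hsub : spectrum ℂ n ⊆ {0} := by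
    intro l hl
    by_contra hne
    have hl0 : l ≠ 0 := by simpa using hne
    obtain ⟨v, h1, h2⟩ := h (-l) (neg_ne_zero.mpr hl0)
    have hu : IsUnit (n + (-l) • (1:A)) := ⟨⟨_, v, h2, h1⟩, rfl⟩
    apply (spectrum.notMem_iff (R := ℂ)).mpr _ hl
    have := hu.neg
    rw [Algebra.algebraMap_eq_smul_one]
    convert this using 1
    rw [neg_smul]; abel
  exact (Set.Nonempty.subset_singleton_iff (spectrum.nonempty n)).mp hsub

lemma qn_small [CompleteSpace A] [Nontrivial A] {n : A} (h : IsQuasinilpotent n) (y : A) :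
    ∃ k : ℕ, 0 < k ∧ ‖n ^ k‖ * ‖y‖ ^ k ≤ 1 / 2 := by
  have hr : spectralRadius ℂ n = 0 := by
    unfold spectralRadius
    rw [h]; simp
  have ht := spectrum.pow_norm_pow_one_div_tendsto_nhds_spectralRadius n
  rw [hr] at ht
  set ε : ℝ := 1 / (2 * (‖y‖ + 1)) with hε
  have hy : 0 ≤ ‖y‖ := norm_nonneg y
  have hε0 : 0 < ε := by positivity
  have h1 := ht.eventually (Iio_mem_nhds (show (0:ENNReal) < ENNReal.ofReal ε by simpa using hε0))
  obtain ⟨k, hk, hk0⟩ := (h1.and (eventually_gt_atTop 0)).exists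
  refine ⟨k, hk0, ?_⟩
  have h2 : ‖n ^ k‖ ^ (1 / k : ℝ) < ε := (ENNReal.ofReal_lt_ofReal_iff hε0).mp hk
  have h3 : ‖n ^ k‖ ≤ ε ^ k := by
    have h4 := pow_le_pow_left₀ (by positivity) h2.le k
    rw [← Real.rpow_natCast, ← Real.rpow_mul (norm_nonneg _)] at h4
    have : (1 / k : ℝ) * k = 1 := by
      have : (k:ℝ) ≠ 0 := by exact_mod_cast hk0.ne'
      field_simp
    rwa [this, Real.rpow_one] at h4
  calc ‖n ^ k‖ * ‖y‖ ^ k ≤ ε ^ k * ‖y‖ ^ k := by gcongr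
    _ = (ε * ‖y‖) ^ k := by rw [mul_pow]
    _ ≤ (1 / 2) ^ k := by
        gcongr
        rw [hε, div_mul_eq_mul_div, div_le_div_iff₀ (by positivity) (by norm_num)]
        linarith
    _ ≤ (1 / 2) ^ 1 := pow_le_pow_of_le_one (by norm_num) (by norm_num) hk0
    _ = 1 / 2 := by norm_num

lemma fix_zero [CompleteSpace A] [Nontrivial A] {n y T : A} (h : IsQuasinilpotent n)
    (hT : T = n * T * y) : T = 0 := by
  have hk : ∀ k : ℕ, T = n ^ k * T * y ^ k := by
    intro k
    induction k with
    | zero => simp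
    | succ k ih =>
      calc T = n ^ k * T * y ^ k := ih
        _ = n ^ k * (n * T * y) * y ^ k := by rw [← hT]
        _ = n ^ (k+1) * T * y ^ (k+1) := by rw [pow_succ, pow_succ' y]; simp only [mul_assoc]
  obtain ⟨k, hk0, hle⟩ := qn_small h y
  have h1 : ‖T‖ ≤ ‖n ^ k‖ * ‖T‖ * ‖y‖ ^ k := by
    calc ‖T‖ = ‖n ^ k * T * y ^ k‖ := by rw [← hk k]
      _ ≤ ‖n ^ k * T‖ * ‖y ^ k‖ := norm_mul_le _ _
      _ ≤ (‖n ^ k‖ * ‖T‖) * ‖y‖ ^ k := by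
        gcongr
        · exact norm_mul_le _ _
        · exact norm_pow_le' y hk0
  have h2 : ‖T‖ ≤ ‖T‖ * (1/2) := by
    calc ‖T‖ ≤ ‖T‖ * (‖n ^ k‖ * ‖y‖ ^ k) := by linarith
      _ ≤ _ := by gcongr
  have := norm_nonneg T
  exact norm_eq_zero.mp (by linarith)

lemma fix_zero' [CompleteSpace A] [Nontrivial A] {n y T : A} (h : IsQuasinilpotent n)
    (hT : T = y * T * n) : T = 0 := by
  have hk : ∀ k : ℕ, T = y ^ k * T * n ^ k := by
    intro k
    induction k with
    | zero => simp
    | succ k ih =>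
      calc T = y ^ k * T * n ^ k := ih
        _ = y ^ k * (y * T * n) * n ^ k := by rw [← hT]
        _ = y ^ (k+1) * T * n ^ (k+1) := by rw [pow_succ y, pow_succ' n]; simp only [mul_assoc]
  obtain ⟨k, hk0, hle⟩ := qn_small h y
  have h1 : ‖T‖ ≤ ‖y‖ ^ k * ‖T‖ * ‖n ^ k‖ := by
    calc ‖T‖ = ‖y ^ k * T * n ^ k‖ := by rw [← hk k]
      _ ≤ ‖y ^ k * T‖ * ‖n ^ k‖ := norm_mul_le _ _
      _ ≤ (‖y‖ ^ k * ‖T‖) * ‖n ^ k‖ := by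
        gcongr
        exact (norm_mul_le _ _).trans (by gcongr; exact norm_pow_le' y hk0)
  have h2 : ‖T‖ ≤ ‖T‖ * (1/2) := by
    calc ‖T‖ ≤ ‖T‖ * (‖n ^ k‖ * ‖y‖ ^ k) := by linarith
      _ ≤ _ := by gcongr
  have := norm_nonneg T
  exact norm_eq_zero.mp (by linarith)

lemma qn_comm_right [CompleteSpace A] [Nontrivial A] {u y s : A} (huy : u * y = y * u)
    (hyuy : y * u * y = y) (h : IsQuasinilpotent (u - u ^ 2 * y)) (hs : s * u = u * s) :
    y * u * s * (y * u) = s * (y * u) := by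
  have hT : s * (y * u) - y * u * s * (y * u) = 0 := by
    apply fix_zero (y := y) h
    have e0 : y * u = u * y := huy.symm
    have e1 : ∀ t, y * (u * t) = u * (y * t) := fun t => by rw [← mul_assoc, ← huy, mul_assoc]
    have e2 : ∀ t, s * (u * t) = u * (s * t) := fun t => by rw [← mul_assoc, hs, mul_assoc]
    have e3 : u * (y * y) = y := by rw [← mul_assoc, huy, hyuy]
    have e4 : ∀ t, u * (y * (y * t)) = y * t := fun t => by
      rw [← mul_assoc y, ← mul_assoc u, e3]
    have e5 : u * (s * (y * y)) = s * y := by rw [← e2, e3]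
    have e6 : u * (y * (s * (y * y))) = y * (s * y) := by rw [← e1, e5]
    simp only [pow_two, sub_mul, mul_sub, mul_assoc, e0, hs, e1, e2, e3, e4, e5, e6]
    abel
  exact (sub_eq_zero.mp hT).symm

lemma qn_comm_left [CompleteSpace A] [Nontrivial A] {u y s : A} (huy : u * y = y * u)
    (hyuy : y * u * y = y) (h : IsQuasinilpotent (u - u ^ 2 * y)) (hs : s * u = u * s) :
    y * u * s * (y * u) = y * u * s := by
  have hT : y * u * s - y * u * s * (y * u) = 0 := by
    apply fix_zero' (y := y) h
    have e0 : y * u = u * y := huy.symm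
    have e1 : ∀ t, y * (u * t) = u * (y * t) := fun t => by rw [← mul_assoc, ← huy, mul_assoc]
    have e2 : ∀ t, s * (u * t) = u * (s * t) := fun t => by rw [← mul_assoc, hs, mul_assoc]
    have e3 : u * (y * y) = y := by rw [← mul_assoc, huy, hyuy]
    have e4 : ∀ t, u * (y * (y * t)) = y * t := fun t => by
      rw [← mul_assoc y, ← mul_assoc u, e3]
    have e5 : u * (s * (y * y)) = s * y := by rw [← e2, e3]
    have e6 : u * (y * (s * (y * y))) = y * (s * y) := by rw [← e1, e5]
    simp only [pow_two, sub_mul, mul_sub, mul_assoc, e0, hs, e1, e2, e3, e4, e5, e6]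
    abel
  exact (sub_eq_zero.mp hT).symm

lemma dcomm [CompleteSpace A] [Nontrivial A] {u y s : A} (huy : u * y = y * u)
    (hyuy : y * u * y = y) (h : IsQuasinilpotent (u - u ^ 2 * y)) (hs : s * u = u * s) :
    s * y = y * s := by
  have hc : s * (y * u) = y * u * s :=
    (qn_comm_right huy hyuy h hs).symm.trans (qn_comm_left huy hyuy h hs)
  calc s * y = s * (y * u) * y := by rw [mul_assoc, hyuy]
    _ = y * (u * s) * y := by rw [hc, mul_assoc y u s]
    _ = y * (s * (u * y)) := by rw [← hs]; simp only [mul_assoc]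
    _ = y * (y * u * s) := by rw [huy, hc]
    _ = y * u * y * s := by rw [mul_assoc y u y, huy]; simp only [mul_assoc]
    _ = y * s := by rw [hyuy]

lemma qn_mul [CompleteSpace A] [Nontrivial A] {n q : A} (h : IsQuasinilpotent n)
    (hq : q * q = q) (hc : q * n = n * q) : IsQuasinilpotent (n - n * q) := by
  apply qn_of
  intro l hl
  obtain ⟨v, h1, h2⟩ := qn_inv h hl
  have hv : q * v = v * q := by
    calc q * v = v * (n + l • (1:A)) * (q * v) := by rw [h1, one_mul]
      _ = v * (q * (n + l • (1:A))) * v := by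
        simp only [mul_add, add_mul, mul_assoc, hc, smul_mul_assoc, mul_smul_comm, one_mul, mul_one]
      _ = v * q * ((n + l • (1:A)) * v) := by simp only [mul_assoc]
      _ = v * q := by rw [h2, mul_one]
  have hv' : ∀ t, v * (q * t) = q * (v * t) := fun t => by rw [← mul_assoc, ← hv, mul_assoc]
  have hc' : ∀ t, n * (q * t) = q * (n * t) := fun t => by rw [← mul_assoc, ← hc, mul_assoc]
  have hq' : ∀ t, q * (q * t) = q * t := fun t => by rw [← mul_assoc, hq]
  have e1 : v * n = 1 - l • v := by
    rw [← h1, mul_add, mul_smul_comm, mul_one]; abel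
  have e2 : n * v = 1 - l • v := by
    rw [← h2, add_mul, smul_mul_assoc, one_mul]; abel
  refine ⟨v - v * q + l⁻¹ • q, ?_, ?_⟩ <;>
  · simp only [mul_add, add_mul, sub_mul, mul_sub, mul_assoc, ← hc, ← hv, hv', hc', hq', hq,
      smul_mul_assoc, mul_smul_comm, one_mul, mul_one, e1, e2, smul_smul, smul_sub, smul_add,
      mul_inv_cancel₀ hl, inv_mul_cancel₀ hl, one_smul]
    abel

lemma acc_reduce [CompleteSpace A] [Nontrivial A] {w q : A} (h : MemAcc w)
    (hq : q * q = q) (hc : q * w = w * q) : MemAcc (w - w * q) := by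
  intro m hm
  obtain ⟨y, h1, h2, h3⟩ := h m hm
  have hu : w - w * q - m • (1:A) = (w - m • (1:A)) - (w - m • (1:A)) * q - m • q := by
    rw [sub_mul, smul_mul_assoc, one_mul]; abel
  have hqu : q * (w - m • (1:A)) = (w - m • (1:A)) * q := by
    simp only [mul_sub, sub_mul, hc, smul_mul_assoc, mul_smul_comm, one_mul, mul_one]
  rw [hu]
  generalize w - m • (1:A) = u at *
  have hqy := dcomm h1 h2 h3 hqu
  have hy' : ∀ t, y * (q * t) = q * (y * t) := fun t => by rw [← mul_assoc, ← hqy, mul_assoc]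
  have hu' : ∀ t, u * (q * t) = q * (u * t) := fun t => by rw [← mul_assoc, ← hqu, mul_assoc]
  have hq' : ∀ t, q * (q * t) = q * t := fun t => by rw [← mul_assoc, hq]
  have e0 : y * u = u * y := h1.symm
  have e1 : ∀ t, y * (u * t) = u * (y * t) := fun t => by rw [← mul_assoc, ← h1, mul_assoc]
  have e3 : u * (y * y) = y := by rw [← mul_assoc, h1, h2]
  refine ⟨y - y * q - m⁻¹ • q, ?_, ?_, ?_⟩
  · simp only [sub_mul, mul_sub, mul_assoc, ← hqu, ← hqy, hy', hu', hq', hq, e0, e1, e3,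
      smul_mul_assoc, mul_smul_comm, smul_smul, smul_sub,
      mul_inv_cancel₀ hm, inv_mul_cancel₀ hm, one_smul]
    abel
  · simp only [sub_mul, mul_sub, mul_assoc, ← hqu, ← hqy, hy', hu', hq', hq, e0, e1, e3,
      smul_mul_assoc, mul_smul_comm, smul_smul, smul_sub,
      mul_inv_cancel₀ hm, inv_mul_cancel₀ hm, one_smul]
    simp [hm]
  · have hn : q * (u - u ^ 2 * y) = (u - u ^ 2 * y) * q := by
      simp only [pow_two, sub_mul, mul_sub, mul_assoc, ← hqu, ← hqy, hy', hu']
    convert qn_mul h3 hq hn using 1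
    simp only [pow_two, sub_mul, mul_sub, mul_assoc, ← hqu, ← hqy, hy', hu', hq', hq, e0, e1, e3,
      smul_mul_assoc, mul_smul_comm, smul_smul, smul_sub,
      mul_inv_cancel₀ hm, inv_mul_cancel₀ hm, one_smul]
    simp [hm, mul_assoc]
    abel

end AgAux

theorem agDrazinInverse_not_unique {A : Type*} [NormedRing A] [NormedAlgebra ℂ A]
    [CompleteSpace A] (a : A) (ha : IsAgDrazinInv a) (hnd : ¬ IsGDrazinInv a) :
    ∃ b c : A, b ≠ c ∧ IsAgDrazinInverseOf b a ∧ IsAgDrazinInverseOf c a := by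
  obtain ⟨b, hb1, hb2, hb3⟩ := ha
  have hnt : Nontrivial A := by
    by_contra hn
    rw [not_nontrivial_iff_subsingleton] at hn
    obtain ⟨x, -, -, hx⟩ := hb3 1 one_ne_zero
    unfold IsQuasinilpotent at hx
    rw [spectrum.of_subsingleton] at hx
    exact (Set.singleton_ne_empty _ hx.symm)
  obtain ⟨l, hl, hl0⟩ : ∃ l ∈ spectrum ℂ (a - a ^ 2 * b), l ≠ 0 := by
    by_contra! hcon
    exact hnd ⟨b, hb1, hb2,
      (Set.Nonempty.subset_singleton_iff (spectrum.nonempty _)).mp fun l hl => hcon l hl⟩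
  obtain ⟨x, hx1, hx2, hx3⟩ := hb3 l hl0
  have hbp : b * (a - a ^ 2 * b) = 0 := by
    rw [mul_sub, pow_two, ← mul_assoc, ← mul_assoc, ← hb1, mul_assoc a b a, ← hb1,
      mul_assoc a (a * b) b, hb1, hb2, ← hb1, sub_self]
  have hpb : (a - a ^ 2 * b) * b = 0 := by
    rw [sub_mul, pow_two, mul_assoc, mul_assoc, ← mul_assoc a b b, hb1, hb2, ← hb1, sub_self]
  have hwa : (a - a ^ 2 * b) = a * (1 - a * b) := by rw [mul_sub, mul_one, pow_two, mul_assoc]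
  have hwa' : (a - a ^ 2 * b) = (1 - a * b) * a := by
    rw [sub_mul, one_mul, pow_two, mul_assoc, mul_assoc, hb1]
  generalize hw : a - a ^ 2 * b = w at *
  obtain ⟨q, hq⟩ : ∃ q : A, q = 1 - (w - l • (1:A)) * x := ⟨_, rfl⟩
  obtain ⟨u, hu⟩ : ∃ u : A, u = w - l • (1:A) := ⟨_, rfl⟩
  rw [← hu] at hx1 hx2 hx3 hq
  have hwu : w = u + l • (1:A) := by rw [hu]; abel
  have hqq : q * q = q := by
    rw [hq, mul_sub, mul_one, sub_mul, one_mul, mul_assoc u x, ← mul_assoc x u x, hx2]; abel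
  have hqu : q * u = u * q := by
    rw [hq, sub_mul, mul_sub, one_mul, mul_one, mul_assoc, hx1]
  have hqw : q * w = w * q := by
    rw [hwu, mul_add, add_mul, hqu, mul_smul_comm, smul_mul_assoc, one_mul, mul_one]
  have hq0 : q ≠ 0 := by
    intro h0
    rw [h0] at hq
    have h1 : u * x = 1 := (sub_eq_zero.mp hq.symm).symm
    have hun : IsUnit u := ⟨⟨u, x, h1, hx1 ▸ h1⟩, rfl⟩
    apply (spectrum.notMem_iff (R := ℂ)).mpr _ hl
    convert hun.neg using 1
    rw [Algebra.algebraMap_eq_smul_one, hu]; abel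
  have hn : u - u ^ 2 * x = u * q := by rw [hq, mul_sub, mul_one, pow_two, mul_assoc]
  rw [hn] at hx3
  obtain ⟨v, hv1, hv2⟩ := AgAux.qn_inv hx3 hl0
  -- (n + l) q = w q
  have hnq : (u * q + l • (1:A)) * q = w * q := by
    rw [hwu, add_mul, add_mul, mul_assoc, hqq]
  have hqn : q * (u * q + l • (1:A)) = w * q := by
    rw [← hqw, hwu, mul_add, mul_add, ← hqu, ← mul_assoc, hqq]
  have hvq : v * (w * q) = q := by rw [← hnq, ← mul_assoc, hv1, one_mul]
  have hqv : w * q * v = q := by rw [← hqn, mul_assoc, hv2, mul_one]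
  have hcv : q * v = v * q := by
    calc q * v = v * (w * q) * v := by rw [hvq]
      _ = v * (w * q * v) := by rw [mul_assoc]
      _ = v * q := by rw [hqv]
  have hbq : b * q = 0 := by rw [← hqv, ← mul_assoc, ← mul_assoc, hbp, zero_mul, zero_mul]
  have hqb : q * b = 0 := by
    rw [← hvq, ← hqw, mul_assoc, mul_assoc, hpb, mul_zero, mul_zero]
  have haq : a * q = w * q := by
    rw [hwa, mul_assoc, sub_mul, one_mul, mul_assoc, hbq, mul_zero, sub_zero]
  have hqa : q * a = w * q := by
    rw [← hqw, hwa', hb1, sub_mul, one_mul, mul_sub, mul_assoc b, ← mul_assoc q b, hqb, zero_mul,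
      sub_zero]
  have haz : a * (q * v) = q := by rw [← mul_assoc, haq, hqv]
  have hza : q * v * a = q := by rw [hcv, mul_assoc, hqa, hvq]
  refine ⟨b, b + q * v, ?_, ⟨hb1, hb2, hw ▸ hb3⟩, ?_, ?_, ?_⟩
  · intro h
    have h0 : q * v = 0 := by simpa using h
    rw [h0, mul_zero] at haz
    exact hq0 haz.symm
  · rw [mul_add, add_mul, haz, hza, hb1]
  · rw [add_mul, hza, add_mul, mul_add, mul_add, hb2, hqb, ← mul_assoc q q v, hqq,
      mul_assoc b a, haz, hbq]; abel
  · have : a - a ^ 2 * (b + q * v) = w - w * q := by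
      rw [mul_add, ← sub_sub, hw, pow_two, mul_assoc, haz, haq]
    rw [this]
    exact AgAux.acc_reduce hb3 hqq hqw
end

section
/- Let A be a complex unital Banach algebra and a ∈ A. Then a is ag-Drazin invertible if and only if 0 is not an accumulation point of the generalized Drazin spectrum σ_d(a). -/
open Filter Topology

theorem dy_step {B : Type*} [CommRing B] (e w P Q : B) (hP : (1 - e * w) * P = 1)
    (hQ : (1 - (-e) * w) * Q = 1) :
    (1 - (e * e) * (w * w)) * (P * Q) = 1 ∧ 2 * (P * Q) = P + Q ∧
     4 * (P * Q - (P * Q) * (P * Q)) = (P - P * P) + (Q - Q * Q) := by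
  have h2 : 2 * (P * Q) = P + Q := by
    linear_combination Q * hP + P * hQ
  refine ⟨?_, h2, ?_⟩
  · linear_combination (1 - (-e) * w) * Q * hP + hQ
  · linear_combination (1 - (2 * (P * Q) + P + Q)) * h2

theorem riesz_comm {B : Type*} [NormedCommRing B] [NormedAlgebra ℂ B] [CompleteSpace B] (a : B)
    (h : ∀ z : ℂ, ‖z‖ = 1 → IsUnit (1 - algebraMap ℂ B z * a)) :
    ∃ x : B, x * a * x = x ∧
      ∀ z : ℂ, ‖z‖ ≤ 1 → IsUnit (1 - algebraMap ℂ B z * (a - a ^ 2 * x)) := by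
  -- bounds
  obtain ⟨M, hM⟩ : ∃ M : ℝ, ∀ z : ℂ, ‖z‖ = 1 →
      ‖Ring.inverse (1 - algebraMap ℂ B z * a)‖ ≤ M := by
    have hc : ContinuousOn (fun z : ℂ => Ring.inverse (1 - algebraMap ℂ B z * a))
        (Metric.sphere 0 1) := by
      intro z hz
      obtain ⟨u, hu⟩ := h z (by simpa using hz)
      have h1 := NormedRing.inverse_continuousAt u
      rw [hu] at h1
      have h2 : ContinuousAt (fun z : ℂ => 1 - algebraMap ℂ B z * a) z := by
        have := (algebraMapCLM ℂ B).continuous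
        have h3 : Continuous (fun z : ℂ => algebraMap ℂ B z) := this
        fun_prop
      exact (ContinuousAt.comp (f := fun z : ℂ => 1 - algebraMap ℂ B z * a) h1 h2).continuousWithinAt
    obtain ⟨M, hM⟩ := (isCompact_sphere (0:ℂ) 1).exists_bound_of_continuousOn hc
    exact ⟨M, fun z hz => hM z (by simpa using hz)⟩
  obtain ⟨C, hC0, hC⟩ : ∃ C : ℝ, 0 ≤ C ∧ M + M * M ≤ C := ⟨max 0 (M + M * M), by simp, by simp⟩
  have key : ∀ k : ℕ, ∀ z : ℂ, ‖z‖ = 1 → ∃ P : B, (1 - algebraMap ℂ B z * a ^ (2 ^ k)) * P = 1 ∧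
      ‖P‖ ≤ M ∧ ‖P - P * P‖ ≤ C / 2 ^ k := by
    intro k
    induction k with
    | zero =>
      intro z hz
      refine ⟨Ring.inverse (1 - algebraMap ℂ B z * a), ?_, hM z hz, ?_⟩
      · simpa using Ring.mul_inverse_cancel _ (h z hz)
      · have h1 := hM z hz
        have h2 := norm_sub_le (Ring.inverse (1 - algebraMap ℂ B z * a))
          (Ring.inverse (1 - algebraMap ℂ B z * a) * Ring.inverse (1 - algebraMap ℂ B z * a))
        have h3 := norm_mul_le (Ring.inverse (1 - algebraMap ℂ B z * a))
          (Ring.inverse (1 - algebraMap ℂ B z * a))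
        have h4 := norm_nonneg (Ring.inverse (1 - algebraMap ℂ B z * a))
        have h5 := mul_le_mul h1 h1 h4 (h4.trans h1)
        simp only [pow_zero, div_one]
        linarith
    | succ k ih =>
      intro z hz
      obtain ⟨e, he⟩ := IsAlgClosed.exists_pow_nat_eq z (n := 2) (by norm_num)
      have hen : ‖e‖ = 1 := by
        have : ‖e‖ ^ 2 = 1 := by rw [← norm_pow, he, hz]
        exact (pow_eq_one_iff_of_nonneg (norm_nonneg _) (by norm_num)).1 this
      obtain ⟨P, hP1, hP2, hP3⟩ := ih e hen
      obtain ⟨Q, hQ1, hQ2, hQ3⟩ := ih (-e) (by simpa using hen)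
      rw [map_neg] at hQ1
      obtain ⟨s1, s2, s3⟩ := dy_step _ _ _ _ hP1 hQ1
      refine ⟨P * Q, ?_, ?_, ?_⟩
      · rw [← he, pow_succ 2 k, pow_mul, map_pow, pow_two, pow_two]; exact s1
      · have h1 : ‖(2:ℂ) • (P * Q)‖ = ‖P + Q‖ := by
          rw [← s2, ofNat_smul_eq_nsmul, two_mul, two_nsmul]
        rw [norm_smul] at h1
        have h2 := norm_add_le P Q
        simp at h1
        linarith
      · have h1 : ‖(4:ℂ) • (P * Q - (P * Q) * (P * Q))‖ = ‖(P - P * P) + (Q - Q * Q)‖ := by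
          rw [← s3, ofNat_smul_eq_nsmul, nsmul_eq_mul]; simp
        rw [norm_smul] at h1
        have h2 := norm_add_le (P - P * P) (Q - Q * Q)
        simp only [Complex.norm_ofNat] at h1
        have h3 : C / 2 ^ (k+1) = (C / 2 ^ k) / 2 := by rw [pow_succ]; field_simp
        linarith
  have key1 := fun k => key k 1 (by simp)
  choose P hP1 hP2 hP3 using key1
  simp only [map_one, one_mul] at hP1
  have hstep : ∀ k, ‖P k - P (k+1)‖ ≤ ((2 * M + ‖(1:B)‖) * C) / 2 ^ k := by
    intro k
    obtain ⟨Q, hQ1, hQ2, hQ3⟩ := key k (-1) (by simp)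
    obtain ⟨s1, s2, s3⟩ := dy_step 1 (a ^ 2 ^ k) (P k) Q (by simpa using hP1 k)
      (by simpa using hQ1)
    have h1 : P (k+1) = P k * Q := by
      have h2 := hP1 (k+1)
      rw [pow_succ 2 k, pow_mul, pow_two] at h2
      linear_combination (-P (k+1)) * s1 + (P k * Q) * h2
    have h2 : P k - P (k+1) = (1 - 2 * Q) * (P k - P k * P k) := by
      rw [h1]
      linear_combination (-P k) * s2
    have h2' : ‖(2:B) * Q‖ ≤ 2 * M := by
      rw [two_mul]
      have := norm_add_le Q Q
      linarith
    rw [h2]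
    refine (norm_mul_le _ _).trans ?_
    rw [mul_div_assoc]
    refine mul_le_mul ?_ (hP3 k) (norm_nonneg _) ?_
    · have := norm_sub_le (1:B) (2 * Q); linarith
    · have := norm_nonneg ((2:B) * Q); have := norm_nonneg (1:B); linarith
  obtain ⟨p, hp⟩ : ∃ p, Tendsto P atTop (𝓝 p) := by
    apply cauchySeq_tendsto_of_complete
    refine cauchySeq_of_le_geometric (1/2) ((2 * M + ‖(1:B)‖) * C) (by norm_num) ?_
    intro k
    rw [dist_eq_norm]
    refine (hstep k).trans (le_of_eq ?_)
    rw [one_div, inv_pow, div_eq_mul_inv]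
  have hpp : p - p * p = 0 := by
    have h1 : Tendsto (fun k => P k - P k * P k) atTop (𝓝 (p - p * p)) := hp.sub (hp.mul hp)
    have h2 : Tendsto (fun k => P k - P k * P k) atTop (𝓝 0) := by
      refine squeeze_zero_norm hP3 ?_
      have := (tendsto_pow_atTop_nhds_zero_of_lt_one (r := (1/2:ℝ)) (by norm_num) (by norm_num)).const_mul C
      simpa [div_eq_mul_inv] using this
    exact tendsto_nhds_unique h1 h2
  obtain ⟨k, hk1, hk2⟩ : ∃ k, ‖p * (1 - P k)‖ < 1/3 ∧ ‖(1 - p) * P k‖ < 1 := by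
    have h1 : Tendsto (fun k => p * (1 - P k)) atTop (𝓝 0) := by
      have := (hp.const_sub 1).const_mul p
      rwa [show p * (1 - p) = 0 by linear_combination hpp] at this
    have h2 : Tendsto (fun k => (1 - p) * P k) atTop (𝓝 0) := by
      have := hp.const_mul (1 - p)
      rwa [show (1 - p) * p = 0 by linear_combination hpp] at this
    have e1 := h1.norm.eventually_lt_const (u := 1/3) (by simp)
    have e2 := h2.norm.eventually_lt_const (u := 1) (by simp)
    exact (e1.and e2).exists
  have hk := hP1 k
  obtain ⟨m, hm⟩ : ∃ m, 2 ^ k = m + 1 := Nat.exists_eq_succ_of_ne_zero (by positivity)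
  rw [hm] at hk
  have hu : IsUnit (p + (1 - p) * a) := by
    have h1 : IsUnit (1 - (1 - p) * P k) := isUnit_one_sub_of_norm_lt_one hk2
    refine isUnit_of_dvd_unit ⟨(p + (1 - p) * a ^ m) * (p - (1 - p) * P k), ?_⟩ h1
    have h2 : (p + (1 - p) * a) * (p + (1 - p) * a ^ m) = p + (1 - p) * a ^ (m+1) := by
      rw [pow_succ]
      linear_combination (-1 + a + a ^ m - a ^ m * a) * hpp
    rw [← mul_assoc, h2]
    linear_combination (-(1 - p)) * hk + (1 + P k - a ^ (m+1) - a ^ (m+1) * P k) * hpp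
  obtain ⟨y, hy⟩ := hu.exists_right_inv
  refine ⟨(1 - p) * y, ?_, ?_⟩
  · linear_combination ((1-p)*y) * hy - y * y * hpp
  · have hap : a - a ^ 2 * ((1 - p) * y) = a * p := by
      linear_combination (-a * (1-p)) * hy + (a * y - a ^ 2 * y) * hpp
    rw [hap]
    intro z hz
    have hub : ‖a ^ (m+1) * p‖ < 1 := by
      have h1 : a ^ (m+1) * p = -(p * (1 - P k)) + (a ^ (m+1) * p) * (p * (1 - P k)) := by
        linear_combination (-p) * hk + (a ^ (m+1) * (1 - P k)) * hpp
      have h2 := norm_add_le (-(p * (1 - P k))) ((a ^ (m+1) * p) * (p * (1 - P k)))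
      rw [← h1, norm_neg] at h2
      have h3 := norm_mul_le (a ^ (m+1) * p) (p * (1 - P k))
      nlinarith [norm_nonneg (a ^ (m+1) * p), norm_nonneg (p * (1 - P k))]
    have hpn : ∀ n : ℕ, p ^ (n+1) = p := by
      intro n
      induction n with
      | zero => simp
      | succ n ih => rw [pow_succ, ih]; linear_combination -hpp
    have h1 : IsUnit (1 - (algebraMap ℂ B z * (a * p)) ^ (m+1)) := by
      apply isUnit_one_sub_of_norm_lt_one
      rw [mul_pow, mul_pow, hpn, ← map_pow, ← Algebra.smul_def, norm_smul, norm_pow]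
      calc _ ≤ 1 * ‖a ^ (m+1) * p‖ := by
            gcongr
            exact pow_le_one₀ (norm_nonneg _) hz
        _ < 1 := by simpa using hub
    refine isUnit_of_dvd_unit ?_ h1
    simpa using sub_dvd_pow_sub_pow (1:B) (algebraMap ℂ B z * (a * p)) (m+1)

theorem riesz_one {A : Type*} [NormedRing A] [NormedAlgebra ℂ A] [CompleteSpace A] (a : A)
    (h : ∀ z : ℂ, ‖z‖ = 1 → IsUnit (1 - algebraMap ℂ A z * a)) :
    ∃ x : A, a * x = x * a ∧ x * a * x = x ∧
      ∀ z : ℂ, ‖z‖ ≤ 1 → IsUnit (1 - algebraMap ℂ A z * (a - a ^ 2 * x)) := by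
  let B : Subalgebra ℂ A := Subalgebra.centralizer ℂ (Set.centralizer {a})
  have hBc : IsClosed (B : Set A) := Set.isClosed_centralizer _
  have hBmem : ∀ b : A, b ∈ B ↔ ∀ g ∈ Set.centralizer {a}, g * b = b * g := fun b =>
    Subalgebra.mem_centralizer_iff ℂ
  have hcomm : ∀ x y : B, x * y = y * x := by
    intro x y
    apply Subtype.ext
    exact Set.centralizer_centralizer_comm_of_comm (S := {a}) (by simp) _ x.2 _ y.2
  let : NormedCommRing B := { (inferInstance : NormedRing B) with mul_comm := hcomm }
  have : CompleteSpace B := hBc.completeSpace_coe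
  have haB : a ∈ B := by
    rw [hBmem]
    intro g hg
    exact (hg a rfl).symm
  obtain ⟨x, hx1, hx2⟩ := riesz_comm (⟨a, haB⟩ : B) (by
    intro z hz
    obtain ⟨u, hu⟩ := h z hz
    have hzB : (1 - algebraMap ℂ A z * a) ∈ B :=
      B.sub_mem B.one_mem (B.mul_mem (B.algebraMap_mem z) haB)
    have huB : ((u⁻¹ : Aˣ) : A) ∈ B := by
      rw [hBmem] at hzB ⊢
      intro g hg
      have h1 : Commute g (u : A) := by rw [hu]; exact hzB g hg
      exact h1.units_inv_right
    refine IsUnit.of_mul_eq_one ⟨_, huB⟩ ?_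
    apply Subtype.ext
    change (1 - algebraMap ℂ A z * a) * ((u⁻¹ : Aˣ) : A) = 1
    rw [← hu]; simp)
  refine ⟨x, ?_, ?_, ?_⟩
  · exact congrArg Subtype.val (hcomm ⟨a, haB⟩ x)
  · exact congrArg Subtype.val hx1
  · intro z hz
    exact (hx2 z hz).map B.val

theorem riesz {A : Type*} [NormedRing A] [NormedAlgebra ℂ A] [CompleteSpace A] (a : A)
    (r : ℝ) (hr : 0 < r)
    (h : ∀ z : ℂ, ‖z‖ = r → IsUnit (algebraMap ℂ A z - a)) :
    ∃ x : A, a * x = x * a ∧ x * a * x = x ∧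
      ∀ z : ℂ, r ≤ ‖z‖ → IsUnit (algebraMap ℂ A z - (a - a ^ 2 * x)) := by
  have hrc : (r : ℂ) ≠ 0 := by exact_mod_cast hr.ne'
  have hsm : ∀ (c w : ℂ) (b : A), w ≠ 0 → c ≠ 0 →
      (IsUnit (1 - algebraMap ℂ A w * (c⁻¹ • b)) ↔ IsUnit (algebraMap ℂ A (c / w) - b)) := by
    intro c w b hw hc
    have : 1 - algebraMap ℂ A w * (c⁻¹ • b) =
        (Units.mk0 (w / c) (div_ne_zero hw hc)) • (algebraMap ℂ A (c / w) - b) := by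
      rw [Units.smul_def, Units.val_mk0, smul_sub, Algebra.algebraMap_eq_smul_one,
        Algebra.algebraMap_eq_smul_one, smul_smul, smul_mul_assoc, one_mul, smul_smul]
      rw [show w / c * (c / w) = 1 by field_simp, one_smul, div_eq_mul_inv]
    rw [this]
    constructor
    · intro h
      have := h.smul (Units.mk0 (w / c) (div_ne_zero hw hc))⁻¹
      rwa [inv_smul_smul] at this
    · intro h; exact h.smul _
  obtain ⟨x, hx1, hx2, hx3⟩ := riesz_one ((r:ℂ)⁻¹ • a) (by
    intro z hz
    have hz0 : z ≠ 0 := by rw [← norm_ne_zero_iff, hz]; norm_num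
    rw [hsm _ _ _ hz0 hrc]
    apply h
    rw [norm_div, hz]; simp [hr.le])
  refine ⟨(r:ℂ)⁻¹ • x, ?_, ?_, ?_⟩
  · simpa using hx1
  · rw [smul_mul_assoc, ← mul_smul_comm, mul_smul_comm, hx2]
  · intro z hz
    have hz0 : z ≠ 0 := by rw [← norm_pos_iff]; linarith
    have h1 := hx3 (r / z) (by
      rw [norm_div, div_le_one (by linarith)]; simpa [abs_of_pos hr] using hz)
    have h2 : (r:ℂ)⁻¹ • a - ((r:ℂ)⁻¹ • a) ^ 2 * x = (r:ℂ)⁻¹ • (a - a ^ 2 * ((r:ℂ)⁻¹ • x)) := by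
      rw [smul_pow, smul_sub, smul_mul_assoc, mul_smul_comm, smul_smul, pow_two]
    rw [h2, hsm _ _ _ (div_ne_zero hrc hz0) hrc] at h1
    rwa [show (r:ℂ) / (r / z) = z by field_simp] at h1

theorem unit_up {A : Type*} [NormedRing A] [NormedAlgebra ℂ A] [CompleteSpace A] (a x : A)
    (h1 : a * x = x * a) (h2 : x * a * x = x) :
    ∃ ε > 0, ∀ z : ℂ, ‖z‖ < ε → IsUnit (algebraMap ℂ A z - (a - a ^ 2 * x)) →
      IsUnit (algebraMap ℂ A z - a) := by
  refine ⟨1 / (‖x‖ + 1), by positivity, ?_⟩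
  intro z hz hu
  have hn : ‖z • x‖ < 1 := by
    rw [norm_smul]
    rw [lt_div_iff₀ (by positivity)] at hz
    nlinarith [norm_nonneg z]
  obtain ⟨v, hv⟩ := isUnit_one_sub_of_norm_lt_one hn
  obtain ⟨u, hu⟩ := hu
  have cax : Commute a x := h1
  have cza : ∀ b : A, Commute (algebraMap ℂ A z) b := fun b => Algebra.commutes z b
  rw [Algebra.smul_def] at hv
  generalize algebraMap ℂ A z = s at *
  have hsa := (cza a).eq
  have hsx := (cza x).eq
  have cau : Commute a (u : A) := by
    rw [hu]
    exact (cza a).symm.sub_right ((Commute.refl a).sub_right (((Commute.refl a).pow_right 2).mul_right cax))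
  have cxu : Commute x (u : A) := by
    rw [hu]
    exact (cza x).symm.sub_right (cax.symm.sub_right ((cax.symm.pow_right 2).mul_right (Commute.refl x)))
  have cav : Commute a (v : A) := by
    rw [hv]
    exact (Commute.one_right a).sub_right ((cza a).symm.mul_right cax)
  have cxv : Commute x (v : A) := by
    rw [hv]
    exact (Commute.one_right x).sub_right ((cza x).symm.mul_right (Commute.refl x))
  have csu : Commute s (u : A) := cza u
  have csv : Commute s (v : A) := cza v
  have e1 : (s - a) * (1 - a * x) = u * (1 - a * x) := by
    have h3 : a * x * (a * x) = a * x := by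
      rw [mul_assoc, ← mul_assoc x, h2]
    have h4 : a ^ 2 * x * (1 - a * x) = 0 := by
      rw [pow_two, mul_assoc a a x, mul_sub, mul_assoc a (a * x) (a * x), h3]; simp
    have h5 : (u : A) * (1 - a * x) = (s - a) * (1 - a * x) + a ^ 2 * x * (1 - a * x) := by
      rw [hu]; noncomm_ring
    rw [h5, h4, add_zero]
  have e2 : (s - a) * x = - (a * x) * v := by
    rw [hv]
    have h5 : a * x * (s * x) = s * x := by
      rw [← mul_assoc, mul_assoc a x s, ← hsx, ← mul_assoc, ← hsa, mul_assoc, mul_assoc,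
        ← mul_assoc a, h1, h2]
    have : - (a * x) * (1 - s * x) = - (a * x) + a * x * (s * x) := by noncomm_ring
    rw [this, h5]; noncomm_ring
  have e : (s - a) * ((1 - a * x) * ↑u⁻¹ - x * ↑v⁻¹) = 1 := by
    have : (s - a) * ((1 - a * x) * ↑u⁻¹ - x * ↑v⁻¹) =
      (s - a) * (1 - a * x) * ↑u⁻¹ - ((s - a) * x) * ↑v⁻¹ := by noncomm_ring
    rw [this, e1, e2]
    have c1 : Commute (u : A) (1 - a * x) :=
      ((Commute.one_left _).sub_left (cau.mul_left cxu)).symm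
    rw [c1.eq, mul_assoc, Units.mul_inv, mul_assoc, Units.mul_inv]
    noncomm_ring
  have c : Commute (s - a) ((1 - a * x) * ↑u⁻¹ - x * ↑v⁻¹) := by
    have hx : Commute (s - a) x := (cza x).sub_left cax
    have ha : Commute (s - a) a := (cza a).sub_left (Commute.refl a)
    have hu' : Commute (s - a) (u : A) := (cza _).sub_left cau
    have hv' : Commute (s - a) (v : A) := (cza _).sub_left cav
    exact (((Commute.one_right _).sub_right (ha.mul_right hx)).mul_right
      hu'.units_inv_right).sub_right (hx.mul_right hv'.units_inv_right)
  exact ⟨⟨s - a, _, e, by rw [← c.eq]; exact e⟩, rfl⟩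

theorem unit_down {A : Type*} [NormedRing A] [NormedAlgebra ℂ A] (a x : A)
    (h1 : a * x = x * a) (h2 : x * a * x = x) (z : ℂ) (hz : z ≠ 0)
    (hu : IsUnit (algebraMap ℂ A z - a)) : IsUnit (algebraMap ℂ A z - (a - a ^ 2 * x)) := by
  obtain ⟨u, hu⟩ := hu
  have cax : Commute a x := h1
  have cza : ∀ b : A, Commute (algebraMap ℂ A z) b := fun b => Algebra.commutes z b
  have cta : ∀ b : A, Commute (algebraMap ℂ A z⁻¹) b := fun b => Algebra.commutes z⁻¹ b
  have hst : algebraMap ℂ A z * algebraMap ℂ A z⁻¹ = 1 := by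
    rw [← map_mul, mul_inv_cancel₀ hz, map_one]
  generalize algebraMap ℂ A z = s at *
  generalize algebraMap ℂ A z⁻¹ = t at *
  have cau : Commute a (u : A) := by
    rw [hu]; exact (cza a).symm.sub_right (Commute.refl a)
  have cxu : Commute x (u : A) := by
    rw [hu]; exact (cza x).symm.sub_right cax.symm
  have h3 : a * x * (a * x) = a * x := by
    rw [mul_assoc, ← mul_assoc x, h2]
  have e0 : s - (a - a ^ 2 * x) = u * (1 - a * x) + s * (a * x) := by
    rw [hu]; noncomm_ring
  have cp : Commute (u : A) (a * x) := (cau.mul_left cxu).symm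
  have hq : (1 - a * x) * (1 - a * x) = 1 - a * x := by
    have : (1 - a * x) * (1 - a * x) = 1 - a * x - a * x + a * x * (a * x) := by noncomm_ring
    rw [this, h3]; noncomm_ring
  have hqp : (1 - a * x) * (a * x) = 0 := by rw [sub_mul, h3]; simp
  have hpq : (a * x) * (1 - a * x) = 0 := by rw [mul_sub, h3]; simp
  have cq : Commute (u : A) (1 - a * x) := (Commute.one_right _).sub_right cp
  rw [e0]
  have cts : Commute t s := cta s
  generalize a * x = p at *
  generalize hqd : (1 - p) = q at *
  have cq' : Commute (↑u⁻¹ : A) q := cq.units_inv_left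
  have cp' : Commute (↑u⁻¹ : A) p := cp.units_inv_left
  have e : (↑u * q + s * p) * (↑u⁻¹ * q + t * p) = 1 := by
    have w1 : ↑u * q * (↑u⁻¹ * q) = q := by
      rw [cq'.eq, mul_assoc, ← mul_assoc q, hq, ← cq'.eq, ← mul_assoc, Units.mul_inv, one_mul]
    have w2 : ↑u * q * (t * p) = 0 := by
      rw [(cta p).eq, mul_assoc, ← mul_assoc q, hqp]; simp
    have w3 : s * p * (↑u⁻¹ * q) = 0 := by
      rw [cq'.eq, mul_assoc, ← mul_assoc p, hpq]; simp
    have w4 : s * p * (t * p) = p := by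
      rw [(cta p).eq, mul_assoc, ← mul_assoc p, h3, ← (cta p).eq, ← mul_assoc, hst, one_mul]
    rw [add_mul, mul_add, mul_add, w1, w2, w3, w4, ← hqd]; noncomm_ring
  have c : Commute (↑u * q + s * p) (↑u⁻¹ * q + t * p) := by
    have cqp : Commute q p := by rw [Commute, SemiconjBy, hqp, hpq]
    have cuu : Commute (u : A) (↑u⁻¹ : A) := (Commute.refl (u : A)).units_inv_right
    have a1 : Commute (↑u * q) (↑u⁻¹ * q) :=
      (cuu.mul_right cq).mul_left (cq'.symm.mul_right (Commute.refl q))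
    have a2 : Commute (↑u * q) (t * p) := ((cta _).symm).mul_right (cp.mul_left cqp)
    have a3 : Commute (s * p) (↑u⁻¹ * q) := (cza _).mul_left (cp'.symm.mul_right cqp.symm)
    have a4 : Commute (s * p) (t * p) := (cza _).mul_left ((cta _).symm.mul_right (Commute.refl p))
    exact (a1.add_right a2).add_left (a3.add_right a4)
  exact ⟨⟨_, _, e, by rw [← c.eq]; exact e⟩, rfl⟩

theorem gD_zero {A : Type*} [NormedRing A] [NormedAlgebra ℂ A] [CompleteSpace A] [Nontrivial A]
    (a : A) : IsGDrazinInv a ↔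
      ∃ ε > 0, ∀ z : ℂ, ‖z‖ < ε → z ≠ 0 → IsUnit (algebraMap ℂ A z - a) := by
  constructor
  · rintro ⟨x, h1, h2, h3⟩
    obtain ⟨ε, hε, h⟩ := unit_up a x h1 h2
    refine ⟨ε, hε, fun z hz hz0 => h z hz ?_⟩
    rw [← spectrum.notMem_iff, h3]
    exact hz0
  · rintro ⟨ε, hε, h⟩
    obtain ⟨x, h1, h2, h3⟩ := riesz a (ε / 2) (by positivity) (by
      intro z hz
      exact h z (by linarith) (by rw [← norm_pos_iff]; linarith))
    refine ⟨x, h1, h2, ?_⟩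
    refine (Set.Nonempty.subset_singleton_iff (spectrum.nonempty _)).1 ?_
    intro z hz
    by_contra hz0
    rw [spectrum.mem_iff] at hz
    apply hz
    by_cases hc : ε / 2 ≤ ‖z‖
    · exact h3 z hc
    · exact unit_down a x h1 h2 z hz0 (h z (by linarith) hz0)

theorem gD_iff {A : Type*} [NormedRing A] [NormedAlgebra ℂ A] [CompleteSpace A] [Nontrivial A]
    (a : A) (l : ℂ) : IsGDrazinInv (a - l • (1 : A)) ↔
      ∃ ε > 0, ∀ z : ℂ, ‖z - l‖ < ε → z ≠ l → IsUnit (algebraMap ℂ A z - a) := by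
  rw [gD_zero]
  have key : ∀ z : ℂ, algebraMap ℂ A z - (a - l • (1 : A)) = algebraMap ℂ A (z + l) - a := by
    intro z
    rw [map_add, Algebra.algebraMap_eq_smul_one l]; abel
  constructor
  · rintro ⟨ε, hε, h⟩
    refine ⟨ε, hε, fun z hz hne => ?_⟩
    have := h (z - l) hz (sub_ne_zero.2 hne)
    rwa [key, sub_add_cancel] at this
  · rintro ⟨ε, hε, h⟩
    refine ⟨ε, hε, fun z hz hne => ?_⟩
    rw [key]
    exact h _ (by simpa using hz) (by simpa using hne)

theorem not_accPt_iff {S : Set ℂ} {l : ℂ} :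
    ¬ AccPt l (𝓟 S) ↔ ∃ ε > 0, ∀ z : ℂ, ‖z - l‖ < ε → z ≠ l → z ∉ S := by
  rw [accPt_iff_frequently, Filter.not_frequently, Metric.eventually_nhds_iff]
  simp only [dist_eq_norm, not_and]

theorem exists_circle {A : Type*} [NormedRing A] [NormedAlgebra ℂ A] [CompleteSpace A]
    [Nontrivial A] (a : A) (ε : ℝ) (hε : 0 < ε)
    (h : ∀ z : ℂ, ‖z‖ < ε → z ≠ 0 → IsGDrazinInv (a - z • (1 : A))) :
    ∃ r, 0 < r ∧ r < ε ∧ ∀ z : ℂ, ‖z‖ = r → IsUnit (algebraMap ℂ A z - a) := by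
  by_contra! hcon
  let K : Set ℂ := spectrum ℂ a ∩ {z | ε / 3 ≤ ‖z‖ ∧ ‖z‖ ≤ ε / 2}
  have hK : IsCompact K := (spectrum.isCompact a).inter_right
    ((isClosed_le continuous_const continuous_norm).inter
      (isClosed_le continuous_norm continuous_const))
  have hinf : K.Infinite := by
    intro hf
    have h1 : (norm '' K).Finite := hf.image _
    refine (Set.Icc_infinite (show ε / 3 < ε / 2 by linarith)) (h1.subset ?_)
    intro r hr
    obtain ⟨z, hz, hu⟩ := hcon r (by linarith [hr.1]) (by linarith [hr.2])
    exact ⟨z, ⟨hu, by rw [Set.mem_ofPred_eq, hz]; exact hr⟩, hz⟩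
  obtain ⟨l, hl, hacc⟩ := hinf.exists_accPt_of_subset_isCompact hK subset_rfl
  have hl1 := hl.2.1
  have hl2 := hl.2.2
  have hg := (gD_iff a l).1 (h l (by linarith) (by rw [← norm_pos_iff]; linarith))
  obtain ⟨δ, hδ, hg⟩ := hg
  refine (not_accPt_iff (S := K)).2 ⟨δ, hδ, fun z hz hne hzK => ?_⟩ hacc
  exact hzK.1 (hg z hz hne)

theorem agDrazin_iff_not_accPt_gDrazinSpectrum {A : Type*} [NormedRing A] [NormedAlgebra ℂ A]
    [CompleteSpace A] (a : A) :
    IsAgDrazinInv a ↔ ¬ AccPt (0 : ℂ) (𝓟 (gDrazinSpectrum a)) := by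
  rcases subsingleton_or_nontrivial A with hA | hA
  · have hno : ∀ b : A, ¬ IsGDrazinInv b := by
      rintro b ⟨x, -, -, h⟩
      rw [IsQuasinilpotent, spectrum.of_subsingleton] at h
      exact Set.singleton_ne_empty _ h.symm
    constructor
    · rintro ⟨x, -, -, h⟩
      exact absurd (h 1 one_ne_zero) (hno _)
    · rw [not_accPt_iff]
      rintro ⟨ε, hε, h⟩
      refine absurd (hno (a - ((ε / 2 : ℝ) : ℂ) • 1)) (h _ ?_ ?_)
      · rw [sub_zero, Complex.norm_real, Real.norm_of_nonneg (by positivity)]; linarith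
      · exact_mod_cast (by positivity : ε / 2 ≠ 0)
  rw [not_accPt_iff]
  simp only [gDrazinSpectrum, Set.mem_ofPred_eq, not_not, sub_zero]
  constructor
  · rintro ⟨x, h1, h2, h3⟩
    obtain ⟨ε, hε, h⟩ := unit_up a x h1 h2
    refine ⟨ε, hε, fun l hl hl0 => ?_⟩
    obtain ⟨δ, hδ, hd⟩ := (gD_iff _ l).1 (h3 l hl0)
    rw [gD_iff]
    refine ⟨min δ (ε - ‖l‖), lt_min hδ (by linarith), fun z hz hne => ?_⟩
    have hz1 := hz.trans_le (min_le_left _ _)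
    have hz2 := hz.trans_le (min_le_right _ _)
    refine h z ?_ (hd z hz1 hne)
    have := norm_sub_norm_le z l
    linarith
  · rintro ⟨ε, hε, h⟩
    obtain ⟨r, hr0, hr, hc⟩ := exists_circle a ε hε h
    obtain ⟨x, h1, h2, h3⟩ := riesz a r hr0 hc
    refine ⟨x, h1, h2, fun l hl => ?_⟩
    rw [gD_iff]
    by_cases hlr : r ≤ ‖l‖
    · have ho : IsOpen (resolventSet ℂ (a - a ^ 2 * x)) := spectrum.isOpen_resolventSet _
      obtain ⟨δ, hδ, hd⟩ := Metric.isOpen_iff.1 ho l (h3 l hlr)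
      refine ⟨δ, hδ, fun z hz _ => hd ?_⟩
      rwa [Metric.mem_ball, dist_eq_norm]
    · obtain ⟨δ, hδ, hd⟩ := (gD_iff _ l).1 (h l (by linarith) hl)
      refine ⟨min δ ‖l‖, lt_min hδ (norm_pos_iff.2 hl), fun z hz hne => ?_⟩
      have hz1 := hz.trans_le (min_le_left _ _)
      have hz2 := hz.trans_le (min_le_right _ _)
      refine unit_down a x h1 h2 z ?_ (hd z hz1 hne)
      rintro rfl
      simp at hz2
end
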